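/- arXiv:1710.07996 — 6 statements merged into one kernel-verified Lean document; each statement's English description precedes it below -/
import Mathlib

section
/- Let H be a complex Hilbert space, let a < a' ≤ b' < b be real numbers, and let C > 0. Then there exists C' > 0, depending only on C, a, b, a', b', such that the following holds for every h ∈ (0,1]: suppose A : [a,b] → B(H) is a continuous family of bounded linear operators with ‖A(t)‖ ≤ C and ‖A(t) − A(t)*‖ ≤ C h for all t ∈ [a,b]; suppose g : [a,b] → H is continuous with ∫_a^b ‖g(t)‖² dt ≤ C² h²; and suppose w : [a,b] → H is differentiable and satisfies h w'(t) = i (A(t) w(t) + g(t)) for all t ∈ [a,b], together with ∫_a^b ‖w(t)‖² dt ≤ C². Then ‖w(t)‖ ≤ C' for every t ∈ [a', b']. -/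
/-!
The energy `f t = ‖w t‖ ^ 2` satisfies `f' = 2 Re ⟪w, w'⟫`. Since `2 i Im ⟪w, A w⟫ = ⟪w, (A - A*) w⟫`,
the near self-adjointness of `A` compensates the factor `1 / h`, and Young's inequality handles the
source, giving `|f'| ≤ (C + 1) f + ‖g‖² / h²` (`energy_deriv_bound`). The right-hand side has
integral at most `(C + 1) C² + C²` over `[a, b]`, so the oscillation of `f` is bounded by this
number. As the mean of `f` is at most `C² / (b - a)`, so is `f` at every point of `[a, b]` up to
that oscillation; no cut-off in time is needed.
-/

open MeasureTheory Complex

/-- The skew-adjoint part of `B` controls the imaginary part of its quadratic form. -/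
lemma two_mul_abs_im_inner_le {H : Type*} [NormedAddCommGroup H] [InnerProductSpace ℂ H]
    [CompleteSpace H] (B : H →L[ℂ] H) (x : H) :
    2 * |(inner ℂ x (B x)).im| ≤ ‖B - ContinuousLinearMap.adjoint B‖ * ‖x‖ ^ 2 := by
  have h1 : inner ℂ x ((B - ContinuousLinearMap.adjoint B) x)
      = ((2 * (inner ℂ x (B x)).im : ℝ) : ℂ) * I := by
    rw [sub_apply, inner_sub_right, ContinuousLinearMap.adjoint_inner_right,
      ← inner_conj_symm (B x) x]
    generalize inner ℂ x (B x) = z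
    apply Complex.ext <;> simp
    ring
  have h2 : ‖inner ℂ x ((B - ContinuousLinearMap.adjoint B) x)‖
      ≤ ‖x‖ * (‖B - ContinuousLinearMap.adjoint B‖ * ‖x‖) :=
    (norm_inner_le_norm _ _).trans
      (mul_le_mul_of_nonneg_left (ContinuousLinearMap.le_opNorm _ _) (norm_nonneg _))
  rw [h1, norm_mul, Complex.norm_I, mul_one, Complex.norm_real, Real.norm_eq_abs, abs_mul,
    abs_two] at h2
  linarith

/-- The energy inequality `|2 Re ⟪x, w'⟫| ≤ (C + 1) ‖x‖² + ‖y‖² / h²` for `w' = (i / h) (B x + y)`. -/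
lemma energy_deriv_bound {H : Type*} [NormedAddCommGroup H] [InnerProductSpace ℂ H]
    [CompleteSpace H] {C h : ℝ} (hh : 0 < h) (B : H →L[ℂ] H) (x y : H)
    (hB : ‖B - ContinuousLinearMap.adjoint B‖ ≤ C * h) :
    |2 * (inner ℂ x ((I / (h : ℂ)) • (B x + y))).re| ≤ (C + 1) * ‖x‖ ^ 2 + ‖y‖ ^ 2 / h ^ 2 := by
  have e : 2 * (inner ℂ x ((I / (h : ℂ)) • (B x + y))).re
      = -(2 * (inner ℂ x (B x)).im / h + 2 * (inner ℂ x y).im / h) := by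
    rw [inner_smul_right, inner_add_right,
      show I / (h : ℂ) = ((h⁻¹ : ℝ) : ℂ) * I by push_cast; ring, mul_assoc, Complex.re_ofReal_mul]
    simp
    ring
  have h1 : |2 * (inner ℂ x (B x)).im / h| ≤ C * ‖x‖ ^ 2 := by
    rw [abs_div, abs_mul, abs_two, abs_of_pos hh, div_le_iff₀ hh]
    have := mul_le_mul_of_nonneg_right hB (sq_nonneg ‖x‖)
    linarith [two_mul_abs_im_inner_le B x]
  have h2 : |2 * (inner ℂ x y).im / h| ≤ ‖x‖ ^ 2 + ‖y‖ ^ 2 / h ^ 2 := by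
    have h3 : |(inner ℂ x y).im| ≤ ‖x‖ * ‖y‖ :=
      (Complex.abs_im_le_norm _).trans (norm_inner_le_norm _ _)
    rw [abs_div, abs_mul, abs_two, abs_of_pos hh]
    calc 2 * |(inner ℂ x y).im| / h ≤ 2 * (‖x‖ * ‖y‖) / h := by gcongr
      _ = 2 * ‖x‖ * (‖y‖ / h) := by ring
      _ ≤ ‖x‖ ^ 2 + (‖y‖ / h) ^ 2 := two_mul_le_add_sq _ _
      _ = _ := by rw [div_pow]
  rw [e, abs_neg]
  linarith [abs_add_le (2 * (inner ℂ x (B x)).im / h) (2 * (inner ℂ x y).im / h)]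

/-- **Abstract semiclassical hyperbolic estimate.**
Let `H` be a complex Hilbert space, `a < a' ≤ b' < b`, `C > 0`. There is `C' > 0` such that
for every `h ∈ (0,1]`, every continuous family `A : [a,b] → B(H)` with `‖A(t)‖ ≤ C` and
`‖A(t) − A(t)*‖ ≤ C h`, every continuous `g` with `∫_a^b ‖g‖² ≤ C² h²`, and every
differentiable `w` with `h w' = i (A w + g)` and `∫_a^b ‖w‖² ≤ C²`, one has `‖w(t)‖ ≤ C'`
for all `t ∈ [a', b']`. -/
theorem stmt_2 {H : Type*} [NormedAddCommGroup H] [InnerProductSpace ℂ H] [CompleteSpace H]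
    (a a' b' b C : ℝ) (haa' : a < a') (ha'b' : a' ≤ b') (hb'b : b' < b) (hC : 0 < C) :
    ∃ C' > 0, ∀ h ∈ Set.Ioc (0 : ℝ) 1, ∀ A : ℝ → H →L[ℂ] H, ∀ g w : ℝ → H,
      ContinuousOn A (Set.Icc a b) →
      (∀ t ∈ Set.Icc a b, ‖A t‖ ≤ C) →
      (∀ t ∈ Set.Icc a b, ‖A t - ContinuousLinearMap.adjoint (A t)‖ ≤ C * h) →
      ContinuousOn g (Set.Icc a b) →
      (∫ t in a..b, ‖g t‖ ^ 2) ≤ C ^ 2 * h ^ 2 →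
      (∀ t ∈ Set.Icc a b,
        HasDerivAt w ((Complex.I / (h : ℂ)) • (A t (w t) + g t)) t) →
      (∫ t in a..b, ‖w t‖ ^ 2) ≤ C ^ 2 →
      ∀ t ∈ Set.Icc a' b', ‖w t‖ ≤ C' := by
  have hab : a < b := by linarith
  -- `C' = 1 + M` rather than `√M`, where `M` bounds the energy: `x ^ 2 ≤ M` gives `x ≤ 1 + M`.
  refine ⟨1 + (C ^ 2 / (b - a) + ((C + 1) * C ^ 2 + C ^ 2)), by
    have : 0 < b - a := by linarith
    positivity, ?_⟩
  rintro h ⟨hh, -⟩ A g w hA - hAA hg hgi hw hwi t ht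
  have ht' : t ∈ Set.Icc a b := ⟨by linarith [ht.1], by linarith [ht.2]⟩
  have hwc : ContinuousOn w (Set.Icc a b) :=
    fun s hs => (hw s hs).continuousAt.continuousWithinAt
  set f : ℝ → ℝ := fun s => ‖w s‖ ^ 2 with hf
  set f' : ℝ → ℝ := fun s => 2 * (inner ℂ (w s) ((I / (h : ℂ)) • (A s (w s) + g s))).re with hf'
  set F : ℝ → ℝ := fun s => (C + 1) * ‖w s‖ ^ 2 + ‖g s‖ ^ 2 / h ^ 2 with hF
  have hfd : ∀ s ∈ Set.Icc a b, HasDerivAt f (f' s) s := fun s hs => by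
    let _ : InnerProductSpace ℝ H := InnerProductSpace.complexToReal
    have h1 := HasDerivAt.norm_sq (F := H) (f := w) (hw s hs)
    rwa [real_inner_eq_re_inner ℂ] at h1
  have hfc : ContinuousOn f (Set.Icc a b) := hwc.norm.pow 2
  have hgc : ContinuousOn (fun s => ‖g s‖ ^ 2) (Set.Icc a b) := hg.norm.pow 2
  have hf'c : ContinuousOn f' (Set.Icc a b) :=
    continuousOn_const.mul (Complex.continuous_re.comp_continuousOn
      (ContinuousOn.inner (𝕜 := ℂ) hwc (((hA.clm_apply hwc).add hg).const_smul _)))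
  have hFc : ContinuousOn F (Set.Icc a b) :=
    (continuousOn_const.mul hfc).add (hgc.div_const _)
  have hbound : ∀ s ∈ Set.Icc a b, |f' s| ≤ F s := fun s hs =>
    energy_deriv_bound hh (A s) (w s) (g s) (hAA s hs)
  have hF0 : ∀ s, 0 ≤ F s := fun s => by simp only [hF]; positivity
  have hfi : IntervalIntegrable f volume a b := hfc.intervalIntegrable_of_Icc hab.le
  have hgi' : IntervalIntegrable (fun s => ‖g s‖ ^ 2) volume a b :=
    hgc.intervalIntegrable_of_Icc hab.le
  have hFi : IntervalIntegrable F volume a b := hFc.intervalIntegrable_of_Icc hab.le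
  have hFint : ∫ s in a..b, F s ≤ (C + 1) * C ^ 2 + C ^ 2 := by
    simp only [hF]
    rw [intervalIntegral.integral_add (hfi.const_mul _) (hgi'.div_const _),
      intervalIntegral.integral_const_mul, intervalIntegral.integral_div]
    have h1 : (∫ s in a..b, ‖g s‖ ^ 2) / h ^ 2 ≤ C ^ 2 := by
      rwa [div_le_iff₀ (by positivity)]
    have h2 := mul_le_mul_of_nonneg_left hwi (by linarith : 0 ≤ C + 1)
    linarith
  have hosc : ∀ s ∈ Set.Icc a b, f t ≤ f s + ((C + 1) * C ^ 2 + C ^ 2) := by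
    intro s hs
    have hsub : Set.uIcc s t ⊆ Set.Icc a b := Set.uIcc_subset_Icc hs ht'
    have hsub' : Set.uIoc s t ⊆ Set.Ioc a b := by
      rw [Set.uIoc]
      exact Set.Ioc_subset_Ioc (le_min hs.1 ht'.1) (max_le hs.2 ht'.2)
    have h1 : ∫ r in s..t, f' r = f t - f s :=
      intervalIntegral.integral_eq_sub_of_hasDerivAt (fun r hr => hfd r (hsub hr))
        (hf'c.mono hsub).intervalIntegrable
    have hFon : IntegrableOn F (Set.Ioc a b) :=
      (intervalIntegrable_iff_integrableOn_Ioc_of_le hab.le).1 hFi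
    have h2 : |∫ r in s..t, f' r| ≤ ∫ r in a..b, F r :=
      calc ‖∫ r in s..t, f' r‖ ≤ ∫ r in Set.uIoc s t, ‖f' r‖ :=
            intervalIntegral.norm_integral_le_integral_norm_uIoc
        _ ≤ ∫ r in Set.uIoc s t, F r :=
            setIntegral_mono_on
              ((hf'c.mono hsub).intervalIntegrable.def'.norm)
              (hFon.mono_set hsub') measurableSet_uIoc
              (fun r hr => hbound r (Set.Ioc_subset_Icc_self (hsub' hr)))
        _ ≤ ∫ r in Set.Ioc a b, F r :=
            setIntegral_mono_set hFon (Filter.Eventually.of_forall hF0)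
              hsub'.eventuallyLE
        _ = ∫ r in a..b, F r := (intervalIntegral.integral_of_le hab.le).symm
    linarith [le_abs_self (∫ r in s..t, f' r)]
  have hmean : (b - a) * f t ≤ C ^ 2 + (b - a) * ((C + 1) * C ^ 2 + C ^ 2) := by
    have h1 := intervalIntegral.integral_mono_on hab.le
      (intervalIntegrable_const (c := f t)) (hfi.add intervalIntegrable_const) hosc
    rw [intervalIntegral.integral_add hfi intervalIntegrable_const] at h1
    simp only [intervalIntegral.integral_const, smul_eq_mul] at h1
    linarith
  have hft : f t ≤ C ^ 2 / (b - a) + ((C + 1) * C ^ 2 + C ^ 2) := by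
    have hba : 0 < b - a := by linarith
    rw [← sub_le_iff_le_add, le_div_iff₀ hba]
    linarith
  simp only [hf] at hft
  nlinarith [sq_nonneg (‖w t‖ - 1)]
end

section
/- Let C₀ ≥ c₀ > 0, let ε > 0 and s₃ > 0. Let y, η : [−s₃, 0] → ℝ be differentiable functions with y'(s) = 2 η(s) and −C₀ ≤ η'(s) ≤ −c₀ for all s ∈ [−s₃, 0]. Assume y(−s₃) = 0, y(0) ≥ 0, and |η(0)| ≥ √ε. Then η(−s₃) ≥ (c₀/C₀)^{3/2} √ε. -/
/-!
If `η 0 ≥ 0` the claim follows because `η` is decreasing and `c₀ / C₀ ≤ 1`. Otherwise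
`η (-s₃) > 0`, since a ray entering with `η ≤ 0` would end at `y < 0`; so `η` vanishes at some
time `t`. The quantity `K y + η²` has derivative `2 η (K + η')`. With `K = c₀` it is nonincreasing
while `η ≥ 0`, giving `c₀ y(t) ≤ η(-s₃)²`; with `K = C₀` it is nonincreasing while `η ≤ 0`, giving
`η(0)² ≤ C₀ y(t)`. Hence `η(-s₃) ≥ (c₀/C₀)^{1/2} |η(0)|`, which is stronger than the claim.
-/

/-- The energy `K y + η²` does not increase along a piece of trajectory on which `η` and `K + η'`
have opposite signs. -/
lemma energy_le {a b K : ℝ} (hab : a ≤ b) {y η η' : ℝ → ℝ}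
    (hy : ∀ s ∈ Set.Icc a b, HasDerivAt y (2 * η s) s)
    (hη : ∀ s ∈ Set.Icc a b, HasDerivAt η (η' s) s)
    (hsign : ∀ s ∈ Set.Icc a b, η s * (K + η' s) ≤ 0) :
    K * y b + η b ^ 2 ≤ K * y a + η a ^ 2 := by
  have hd : ∀ s ∈ Set.Icc a b,
      HasDerivAt (fun s => K * y s + η s ^ 2) (2 * (η s * (K + η' s))) s := by
    intro s hs
    have h := ((hy s hs).const_mul K).add ((hη s hs).pow 2)
    refine h.congr_deriv ?_
    norm_num
    ring
  have hanti : AntitoneOn (fun s => K * y s + η s ^ 2) (Set.Icc a b) := by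
    refine antitoneOn_of_hasDerivWithinAt_nonpos (convex_Icc a b)
      (fun s hs => (hd s hs).continuousAt.continuousWithinAt)
      (fun s hs => (hd s (interior_subset hs)).hasDerivWithinAt) (fun s hs => ?_)
    have := hsign s (interior_subset hs)
    linarith
  exact hanti (Set.left_mem_Icc.2 hab) (Set.right_mem_Icc.2 hab) hab

/-- **ODE lemma near a gliding point.**
Let `C₀ ≥ c₀ > 0`, `ε > 0`, `s₃ > 0`. Let `y, η : [−s₃, 0] → ℝ` be differentiable with
`y' = 2η` and `−C₀ ≤ η' ≤ −c₀` on `[−s₃, 0]`. If `y(−s₃) = 0`, `y(0) ≥ 0` and `|η(0)| ≥ √ε`,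
then `η(−s₃) ≥ (c₀/C₀)^{3/2} √ε`. -/
theorem stmt_4 (c₀ C₀ ε s₃ : ℝ) (hc₀ : 0 < c₀) (hcC : c₀ ≤ C₀) (hε : 0 < ε) (hs₃ : 0 < s₃)
    (y η : ℝ → ℝ) (η' : ℝ → ℝ)
    (hy : ∀ s ∈ Set.Icc (-s₃) 0, HasDerivAt y (2 * η s) s)
    (hη : ∀ s ∈ Set.Icc (-s₃) 0, HasDerivAt η (η' s) s)
    (hη'lb : ∀ s ∈ Set.Icc (-s₃) 0, -C₀ ≤ η' s)
    (hη'ub : ∀ s ∈ Set.Icc (-s₃) 0, η' s ≤ -c₀)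
    (hy0 : y (-s₃) = 0) (hyend : 0 ≤ y 0) (hηend : Real.sqrt ε ≤ |η 0|) :
    (c₀ / C₀) ^ ((3 : ℝ) / 2) * Real.sqrt ε ≤ η (-s₃) := by
  have hC₀ : 0 < C₀ := hc₀.trans_le hcC
  have hr0 : 0 < c₀ / C₀ := div_pos hc₀ hC₀
  have hr1 : c₀ / C₀ ≤ 1 := (div_le_one hC₀).2 hcC
  have hηcont : ContinuousOn η (Set.Icc (-s₃) 0) :=
    fun s hs => (hη s hs).continuousAt.continuousWithinAt
  have hanti : StrictAntiOn η (Set.Icc (-s₃) 0) := by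
    refine strictAntiOn_of_deriv_neg (convex_Icc _ _) hηcont (fun s hs => ?_)
    have hs' := interior_subset hs
    rw [(hη s hs').deriv]
    linarith [hη'ub s hs']
  have hle : -s₃ ≤ 0 := by linarith
  have hL : -s₃ ∈ Set.Icc (-s₃) 0 := Set.left_mem_Icc.2 hle
  have hR : (0 : ℝ) ∈ Set.Icc (-s₃) 0 := Set.right_mem_Icc.2 hle
  rcases le_or_gt 0 (η 0) with h0 | h0
  · rw [abs_of_nonneg h0] at hηend
    have h1 : (c₀ / C₀) ^ ((3 : ℝ) / 2) ≤ 1 := Real.rpow_le_one hr0.le hr1 (by norm_num)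
    have h2 := hanti.antitoneOn hL hR hle
    nlinarith [Real.sqrt_nonneg ε]
  · rw [abs_of_neg h0] at hηend
    have ha : 0 < η (-s₃) := by
      by_contra! hneg
      obtain ⟨ξ, hξ, hξeq⟩ := exists_hasDerivAt_eq_slope y (fun s => 2 * η s)
        (show -s₃ < 0 by linarith)
        (fun s hs => (hy s hs).continuousAt.continuousWithinAt)
        (fun s hs => hy s (Set.Ioo_subset_Icc_self hs))
      have h1 := hanti hL (Set.Ioo_subset_Icc_self hξ) hξ.1
      have h2 : 0 ≤ (y 0 - y (-s₃)) / (0 - -s₃) :=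
        div_nonneg (by linarith) (by linarith)
      rw [← hξeq] at h2
      linarith
    obtain ⟨t, ht, ht0⟩ := intermediate_value_Icc' hle hηcont ⟨h0.le, ha.le⟩
    have hsub1 : Set.Icc (-s₃) t ⊆ Set.Icc (-s₃) 0 := Set.Icc_subset_Icc_right ht.2
    have hsub2 : Set.Icc t 0 ⊆ Set.Icc (-s₃) 0 := Set.Icc_subset_Icc_left ht.1
    have e1 := energy_le (K := c₀) ht.1 (fun s hs => hy s (hsub1 hs))
      (fun s hs => hη s (hsub1 hs)) (fun s hs => by
        have h1 := hanti.antitoneOn (hsub1 hs) ht hs.2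
        have h2 := hη'ub s (hsub1 hs)
        exact mul_nonpos_of_nonneg_of_nonpos (by linarith) (by linarith))
    have e2 := energy_le (K := C₀) ht.2 (fun s hs => hy s (hsub2 hs))
      (fun s hs => hη s (hsub2 hs)) (fun s hs => by
        have h1 := hanti.antitoneOn ht (hsub2 hs) hs.1
        have h2 := hη'lb s (hsub2 hs)
        exact mul_nonpos_of_nonpos_of_nonneg (by linarith) (by linarith))
    rw [ht0, hy0] at e1
    rw [ht0] at e2
    have hb : η 0 ^ 2 ≤ C₀ * y t := by nlinarith [mul_nonneg hC₀.le hyend]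
    have hsq : c₀ / C₀ * η 0 ^ 2 ≤ η (-s₃) ^ 2 := by
      calc c₀ / C₀ * η 0 ^ 2 ≤ c₀ / C₀ * (C₀ * y t) := by gcongr
        _ = c₀ * y t := by field_simp
        _ ≤ η (-s₃) ^ 2 := by linarith
    have hpow : (c₀ / C₀) ^ ((3 : ℝ) / 2) ≤ √(c₀ / C₀) := by
      rw [Real.sqrt_eq_rpow]
      exact Real.rpow_le_rpow_of_exponent_ge hr0 hr1 (by norm_num)
    calc (c₀ / C₀) ^ ((3 : ℝ) / 2) * √ε ≤ √(c₀ / C₀) * (-η 0) := by gcongr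
      _ ≤ η (-s₃) := by
        refine (abs_le_of_sq_le_sq' ?_ ha.le).2
        rw [mul_pow, Real.sq_sqrt hr0.le, neg_sq]
        exact hsq
end

section
/- Let n ≥ 1, let U be an open subset of ℝⁿ, and set X = U ∩ {x ∈ ℝⁿ : x₁ ≥ 0}. Let r : U → ℝ be a smooth real-valued function such that the differential dr(x) ≠ 0 whenever x ∈ X and r(x) = 0, and such that ∂r/∂x₁(x) > 0 whenever x ∈ X satisfies r(x) = 0, x₁ = 0, and ∂r/∂x_j(x) = 0 for all j ≠ 1. Let f₀, f₁, f₂ : U → ℝ be smooth, set F(t,x) = f₀(x) + f₁(x) t + f₂(x) t², and suppose there is a smooth function ψ : ℝ × U → ℝ such that F(t,x) = −ψ(t,x)² whenever x ∈ X and t² = r(x). Then there exist smooth functions ψ₀, ψ₁, g : U → ℝ such that ψ₀(x) = ψ(0,x) and ψ₁(x) = (∂ψ/∂t)(0,x) whenever x ∈ X and r(x) = 0, and such that F(t,x) + (ψ₀(x) + t ψ₁(x))² ≤ g(x) (t² − r(x)) for all t ∈ ℝ and all x ∈ X. -/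
open Set

/-!
For fixed `x` the conditions on the triple `(ψ₀(x), ψ₁(x), g(x))` are convex
(`convex_admissible`), so by a smooth partition of unity it is enough to solve the problem near
each point `x₀` of `U` (`exists_contDiffOn_of_local`, `exists_local`). Write `H` for the half-space.
If `x₀ ∉ H` there is nothing to do, and if `r(x₀) < 0` then `ψ₀ = ψ₁ = 0` and a large constant `g`
will do.

If `r(x₀) ≥ 0`, write `ψ(t, x) = a(t², x) + t b(t², x)` near `x₀` with smooth `a`, `b`
(`exists_local_even_odd`) and put `ψ₀(x) = a(r(x), x)`, `ψ₁(x) = b(r(x), x)`. Then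
`ψ(t, x) = ψ₀(x) + t ψ₁(x)` when `t² = r(x)`, and
`F + (ψ₀ + t ψ₁)² = A + B t + (f₂ + ψ₁²)(t² - r)`
with `A = f₀ + ψ₀² + r (f₂ + ψ₁²)` and `B = f₁ + 2 ψ₀ ψ₁`. Since the left-hand side vanishes at
both roots `t = ±√r`, `A` and `B` vanish on `H ∩ {r > 0}`, which settles the case `r(x₀) > 0`.

If `r(x₀) = 0`, the hypotheses on `dr` give a direction `v` with `∂ᵥ r > 0` along which `H` is
preserved near `x₀` (`exists_direction`). Hence `A` and `B` vanish on `H ∩ {r ≥ 0}` and are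
`O((-r)ᴺ)` for every `N` on `H ∩ {r < 0}` (`flat_estimate`). So there is a smooth flat function `h`
with `|A| + |B| ≤ h(-r) (-r)` there (`exists_flat_majorant`), and `g = f₂ + ψ₁² + h(-r)` works.

The decomposition `ψ = a(t²) + t b(t²)` comes from the Fourier inversion formula, in which
`cos(τt)` and `sin(τt)/t` are replaced by smooth functions of `t²` with bounded derivatives
(`exists_cos_sqrt`, `exists_even_odd`).
-/

section
open MeasureTheory
open scoped ContDiff

/-! ### The function `cos √u` -/

lemma exists_bound_iteratedDeriv {f : ℝ → ℝ} (hf : ContDiff ℝ ∞ f) (a b : ℝ) (j : ℕ)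
    (h : ∃ C, ∀ x, x ∉ Icc a b → |iteratedDeriv j f x| ≤ C) :
    ∃ C, ∀ x, |iteratedDeriv j f x| ≤ C := by
  obtain ⟨C, hC⟩ := h
  have hcont : Continuous (iteratedDeriv j f) :=
    hf.continuous_iteratedDeriv j (by exact_mod_cast le_top)
  obtain ⟨D, hD⟩ := (isCompact_Icc (a := a) (b := b)).exists_bound_of_continuousOn
    hcont.continuousOn
  refine ⟨max C D, fun x => ?_⟩
  by_cases hx : x ∈ Icc a b
  · exact (hD x hx).trans (le_max_right _ _)
  · exact (hC x hx).trans (le_max_left _ _)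

lemma exists_bound_iteratedDeriv_smoothTransition (j : ℕ) :
    ∃ C, ∀ x, |iteratedDeriv j Real.smoothTransition x| ≤ C := by
  refine exists_bound_iteratedDeriv Real.smoothTransition.contDiff 0 1 j ⟨1, fun x hx => ?_⟩
  rw [mem_Icc, not_and_or, not_le, not_le] at hx
  rcases hx with hx | hx
  · have : Real.smoothTransition =ᶠ[nhds x] fun _ => 0 := by
      filter_upwards [Iio_mem_nhds hx] with y hy
      exact Real.smoothTransition.zero_of_nonpos (le_of_lt hy)
    rw [this.iteratedDeriv_eq, iteratedDeriv_const]
    split_ifs <;> simp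
  · have : Real.smoothTransition =ᶠ[nhds x] fun _ => 1 := by
      filter_upwards [Ioi_mem_nhds hx] with y hy
      exact Real.smoothTransition.one_of_one_le (le_of_lt hy)
    rw [this.iteratedDeriv_eq, iteratedDeriv_const]
    split_ifs <;> simp

/-- The entire function `∑ (-u)ᵏ / (2k)!`, i.e. `cos √u`, restricted to the real line. -/
lemma exists_contDiff_cos_sqrt :
    ∃ c : ℝ → ℝ, ContDiff ℝ ∞ c ∧ ∀ t, c (t ^ 2) = Real.cos t := by
  let a : ℕ → ℝ := fun k => (-1) ^ k / ((2 * k).factorial : ℝ)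
  have ha : ∀ k, a k ≠ 0 := fun k => div_ne_zero (by simp) (by positivity)
  have hrad : (FormalMultilinearSeries.ofScalars ℝ a).radius = ⊤ := by
    apply FormalMultilinearSeries.ofScalars_radius_eq_top_of_tendsto ℝ a
      (Filter.Eventually.of_forall ha)
    have h1 : ∀ k : ℕ, ‖a k.succ‖ / ‖a k‖ = 1 / ((2 * (k : ℝ) + 2) * (2 * k + 1)) := by
      intro k
      have : (2 * k.succ).factorial = (2 * k + 2) * ((2 * k + 1) * (2 * k).factorial) := by
        rw [Nat.mul_succ, Nat.factorial_succ, Nat.factorial_succ]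
      simp only [a, norm_div, norm_pow, norm_neg, norm_one, one_pow, this]
      rw [Real.norm_natCast, Real.norm_natCast]
      push_cast
      have : ((2 * k).factorial : ℝ) ≠ 0 := by positivity
      field_simp
    simp_rw [h1]
    refine squeeze_zero (fun k => by positivity) (fun k => ?_)
      tendsto_one_div_add_atTop_nhds_zero_nat
    apply one_div_le_one_div_of_le (by positivity)
    nlinarith [(Nat.cast_nonneg k : (0 : ℝ) ≤ k)]
  have hps := (FormalMultilinearSeries.ofScalars ℝ a).hasFPowerSeriesOnBall (by simp [hrad])
  refine ⟨(FormalMultilinearSeries.ofScalars ℝ a).sum, ?_, fun t => ?_⟩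
  · have : AnalyticOnNhd ℝ (FormalMultilinearSeries.ofScalars ℝ a).sum univ := by
      have := hps.analyticOnNhd
      rwa [hrad, Metric.eball_top] at this
    exact contDiffOn_univ.1 this.contDiffOn_of_completeSpace
  · have h1 := hps.hasSum (y := t ^ 2) (by simp [hrad])
    rw [zero_add] at h1
    have h2 : (fun k => FormalMultilinearSeries.ofScalars ℝ a k fun _ => t ^ 2) =
        fun k : ℕ => (-1) ^ k * t ^ (2 * k) / ((2 * k).factorial : ℝ) := by
      funext k
      rw [FormalMultilinearSeries.ofScalars_apply_eq, smul_eq_mul, ← pow_mul]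
      simp only [a]
      ring
    rw [h2] at h1
    exact h1.unique (Real.hasSum_cos t)

/-- Functions `P(u^{-1/2}) cos √u + Q(u^{-1/2}) sin √u` with polynomials `P`, `Q` are stable under
differentiation on `u > 0` and bounded for `u ≥ 1`. -/
lemma exists_bound_iteratedDeriv_cos_sqrt (j : ℕ) : ∀ P Q : Polynomial ℝ, ∃ C, ∀ u : ℝ, 1 ≤ u →
    |iteratedDeriv j (fun u : ℝ => P.eval (√u)⁻¹ * Real.cos √u + Q.eval (√u)⁻¹ * Real.sin √u) u|
      ≤ C := by
  induction j with
  | zero =>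
    intro P Q
    obtain ⟨A, hA⟩ := (isCompact_Icc (a := (0 : ℝ)) (b := 1)).exists_bound_of_continuousOn
      P.continuous.continuousOn
    obtain ⟨B, hB⟩ := (isCompact_Icc (a := (0 : ℝ)) (b := 1)).exists_bound_of_continuousOn
      Q.continuous.continuousOn
    refine ⟨A + B, fun u hu => ?_⟩
    have hw : (√u)⁻¹ ∈ Icc (0 : ℝ) 1 :=
      ⟨by positivity, inv_le_one_of_one_le₀ (Real.one_le_sqrt.2 hu)⟩
    rw [iteratedDeriv_zero]
    refine (abs_add_le _ _).trans (add_le_add ?_ ?_)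
    · rw [abs_mul]
      exact (mul_le_of_le_one_right (abs_nonneg _) (Real.abs_cos_le_one _)).trans (hA _ hw)
    · rw [abs_mul]
      exact (mul_le_of_le_one_right (abs_nonneg _) (Real.abs_sin_le_one _)).trans (hB _ hw)
  | succ j ih =>
    intro P Q
    obtain ⟨C, hC⟩ := ih
      (Polynomial.C (-1 / 2) * Polynomial.X ^ 3 * P.derivative
        + Polynomial.C (1 / 2) * Polynomial.X * Q)
      (Polynomial.C (-1 / 2) * Polynomial.X ^ 3 * Q.derivative
        - Polynomial.C (1 / 2) * Polynomial.X * P)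
    refine ⟨C, fun u hu => ?_⟩
    rw [iteratedDeriv_succ']
    refine le_trans (le_of_eq ?_) (hC u hu)
    congr 1
    apply Filter.EventuallyEq.iteratedDeriv_eq
    filter_upwards [Ioi_mem_nhds (show (0 : ℝ) < u by linarith)] with y hy
    have hy : 0 < y := hy
    have hs : HasDerivAt (fun u : ℝ => √u) (1 / (2 * √y)) y := Real.hasDerivAt_sqrt hy.ne'
    have hsp : 0 < √y := Real.sqrt_pos.2 hy
    have hi := hs.inv hsp.ne'
    have hP := (P.hasDerivAt (√y)⁻¹).comp y hi
    have hQ := (Q.hasDerivAt (√y)⁻¹).comp y hi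
    have := (hP.mul hs.cos).add (hQ.mul hs.sin)
    refine (HasDerivAt.deriv this).trans ?_
    simp
    field_simp
    ring

/-- A smooth `c` with `c (t²) = cos t` and all derivatives bounded. The function `cos √u` itself
grows exponentially as `u → -∞`, hence the cut-off on `u ≤ -1`. -/
lemma exists_cos_sqrt :
    ∃ c : ℝ → ℝ, ContDiff ℝ ∞ c ∧ (∀ t, c (t ^ 2) = Real.cos t) ∧
      ∀ j : ℕ, ∃ C, ∀ u, |iteratedDeriv j c u| ≤ C := by
  obtain ⟨c, hc, hct⟩ := exists_contDiff_cos_sqrt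
  have hsm : ContDiff ℝ ∞ (fun u => Real.smoothTransition (u + 1) * c u) :=
    (Real.smoothTransition.contDiff.comp (contDiff_id.add contDiff_const)).mul hc
  refine ⟨fun u => Real.smoothTransition (u + 1) * c u, hsm, fun t => ?_, fun j => ?_⟩
  · beta_reduce
    rw [Real.smoothTransition.one_of_one_le (by nlinarith [sq_nonneg t]), one_mul, hct]
  · refine exists_bound_iteratedDeriv hsm (-1) 1 j ?_
    obtain ⟨C, hC⟩ := exists_bound_iteratedDeriv_cos_sqrt j 1 0
    refine ⟨max 0 C, fun u hu => ?_⟩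
    rw [mem_Icc, not_and_or, not_le, not_le] at hu
    rcases hu with hu | hu
    · have : (fun u => Real.smoothTransition (u + 1) * c u) =ᶠ[nhds u] fun _ => 0 := by
        filter_upwards [Iio_mem_nhds hu] with y hy
        rw [Real.smoothTransition.zero_of_nonpos (by linarith [mem_Iio.1 hy]), zero_mul]
      rw [this.iteratedDeriv_eq, iteratedDeriv_const]
      split_ifs <;> simp
    · refine le_trans ?_ ((hC u hu.le).trans (le_max_right _ _))
      refine le_of_eq (congrArg _ (Filter.EventuallyEq.iteratedDeriv_eq _ ?_))
      filter_upwards [Ioi_mem_nhds hu] with y hy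
      have hy : 1 < y := hy
      rw [Real.smoothTransition.one_of_one_le (by linarith), one_mul]
      conv_lhs => rw [← Real.sq_sqrt (show 0 ≤ y by linarith), hct]
      simp

/-! ### A flat majorant -/

/-- There is a smooth function `h`, vanishing on `(-∞, 0]`, that dominates on `(0, 1]` every
quantity which is `≤ C N * s ^ N` for all `N`: the infimum over `N` of these bounds is replaced by
a sum of smoothed steps, one for each dyadic interval. -/
lemma exists_flat_majorant (C : ℕ → ℝ) (hC : ∀ N, 0 ≤ C N) :
    ∃ h : ℝ → ℝ, ContDiff ℝ ∞ h ∧ (∀ s ≤ 0, h s = 0) ∧ (∀ s, 0 ≤ h s) ∧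
      ∀ s u : ℝ, 0 < s → s ≤ 1 → (∀ N, u ≤ C N * s ^ N) → u ≤ h s := by
  -- The `k`-th step has height `ε k` and has been fully climbed at `s = 2⁻ᵏ⁻¹`.
  let ε : ℕ → ℝ := fun k => ⨅ N, C N * ((1 / 2 : ℝ) ^ k) ^ N
  have hbdd : ∀ k, BddBelow (range fun N => C N * ((1 / 2 : ℝ) ^ k) ^ N) := fun k =>
    ⟨0, by rintro _ ⟨N, rfl⟩; exact mul_nonneg (hC N) (by positivity)⟩
  have hε0 : ∀ k, 0 ≤ ε k := fun k =>
    le_ciInf fun N => mul_nonneg (hC N) (by positivity)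
  have hε : ∀ k N, ε k ≤ C N * ((1 / 2 : ℝ) ^ k) ^ N := fun k N => ciInf_le (hbdd k) N
  let T : ℝ → ℝ := fun s => Real.smoothTransition (s - 1)
  have hT : ContDiff ℝ ∞ T :=
    Real.smoothTransition.contDiff.comp (contDiff_id.sub contDiff_const)
  choose M hM using exists_bound_iteratedDeriv_smoothTransition
  have hTM : ∀ j x, |iteratedDeriv j T x| ≤ M j := fun j x => by
    simp only [T]
    rw [iteratedDeriv_comp_sub_const]
    exact hM j _
  have hM0 : ∀ j, 0 ≤ M j := fun j => (abs_nonneg _).trans (hM j 0)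
  let f : ℕ → ℝ → ℝ := fun k s => ε k * T ((4 * 2 ^ k) * s)
  have hf : ∀ k, ContDiff ℝ ∞ (f k) := fun k =>
    contDiff_const.mul (hT.comp (contDiff_const.mul contDiff_id))
  have hder : ∀ (j k : ℕ) (s : ℝ),
      ‖iteratedFDeriv ℝ j (f k) s‖ ≤ C (j + 1) * 4 ^ j * M j * (1 / 2) ^ k := by
    intro j k s
    rw [norm_iteratedFDeriv_eq_norm_iteratedDeriv, iteratedDeriv_const_mul_field,
      iteratedDeriv_comp_const_mul (hT.of_le (by exact_mod_cast le_top)), Real.norm_eq_abs,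
      abs_mul, abs_mul, abs_of_nonneg (hε0 k), abs_of_nonneg (by positivity)]
    calc ε k * ((4 * 2 ^ k) ^ j * |iteratedDeriv j T (4 * 2 ^ k * s)|)
        ≤ (C (j + 1) * ((1 / 2 : ℝ) ^ k) ^ (j + 1)) * ((4 * 2 ^ k) ^ j * M j) := by
          gcongr
          · exact mul_nonneg (hC _) (by positivity)
          · exact hε k (j + 1)
          · exact hTM _ _
      _ = C (j + 1) * 4 ^ j * M j * (1 / 2) ^ k * ((1 / 2 : ℝ) ^ k * 2 ^ k) ^ j := by ring
      _ = _ := by rw [← mul_pow]; norm_num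
  have hsum : ∀ j : ℕ, Summable fun k : ℕ => C (j + 1) * 4 ^ j * M j * (1 / 2 : ℝ) ^ k :=
    fun j => summable_geometric_two.mul_left _
  have hf0 : ∀ k s, 0 ≤ f k s := fun k s =>
    mul_nonneg (hε0 k) (Real.smoothTransition.nonneg _)
  have hfs : ∀ s, Summable fun k => f k s := fun s =>
    Summable.of_norm_bounded (hsum 0) fun k => by simpa using hder 0 k s
  refine ⟨fun s => ∑' k, f k s,
    contDiff_tsum hf (fun j _ => hsum j) (fun j k s _ => hder j k s), fun s hs => ?_,
    fun s => tsum_nonneg fun k => hf0 k s, fun s u hs hs1 hu => ?_⟩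
  · have : ∀ k, f k s = 0 := fun k => by
      simp only [f, T]
      have : (4 * 2 ^ k : ℝ) * s ≤ 0 := mul_nonpos_of_nonneg_of_nonpos (by positivity) hs
      rw [Real.smoothTransition.zero_of_nonpos (by linarith), mul_zero]
    simp [this]
  · obtain ⟨k, hk1, hk2⟩ := exists_nat_pow_near_of_lt_one hs hs1
      (show (0 : ℝ) < 1 / 2 by norm_num) (by norm_num)
    have h1 : u ≤ ε k := le_ciInf fun N => (hu N).trans (by have := hC N; gcongr)
    refine h1.trans (le_trans (le_of_eq ?_) ((hfs s).le_tsum k fun i _ => hf0 i s))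
    have h2 : (2 : ℝ) ≤ 4 * 2 ^ k * s := by
      calc (2 : ℝ) = 4 * 2 ^ k * (1 / 2) ^ (k + 1) := by
            rw [pow_succ, ← mul_assoc, mul_assoc 4, ← mul_pow]; norm_num
        _ ≤ _ := by gcongr
    simp only [f, T]
    rw [Real.smoothTransition.one_of_one_le (by linarith), mul_one]

/-! ### Even-odd decomposition -/

/-- Smooth dependence of an integral on a parameter, when each derivative of the integrand is
dominated by an integrable function uniformly in the parameter. -/
lemma contDiff_integral_of_bound {P Z : Type} [NormedAddCommGroup P] [NormedSpace ℝ P]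
    [NormedAddCommGroup Z] [NormedSpace ℝ Z] [MeasurableSpace Z] [BorelSpace Z]
    [FiniteDimensional ℝ Z] (μ : Measure Z) (m : ℕ) :
    ∀ {F : Type} [NormedAddCommGroup F] [NormedSpace ℝ F] (K : Z → P → F),
    ContDiff ℝ ∞ (Function.uncurry K) →
    (∀ j : ℕ, ∃ B : Z → ℝ, Integrable B μ ∧ ∀ z p, ‖iteratedFDeriv ℝ j (K z) p‖ ≤ B z) →
    ContDiff ℝ m (fun p => ∫ z, K z p ∂μ) := by
  have key : ∀ {F : Type} [NormedAddCommGroup F] [NormedSpace ℝ F] (K : Z → P → F),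
      ContDiff ℝ ∞ (Function.uncurry K) →
      (∀ j : ℕ, ∃ B : Z → ℝ, Integrable B μ ∧ ∀ z p, ‖iteratedFDeriv ℝ j (K z) p‖ ≤ B z) →
      ∀ p, HasFDerivAt (fun p => ∫ z, K z p ∂μ) (∫ z, fderiv ℝ (K z) p ∂μ) p := by
    intro F _ _ K hK hB p
    obtain ⟨B0, hB0, hB0'⟩ := hB 0
    obtain ⟨B1, hB1, hB1'⟩ := hB 1
    have hKp : ∀ p, AEStronglyMeasurable (fun z => K z p) μ := fun p =>
      (hK.continuous.comp (Continuous.prodMk_left p)).aestronglyMeasurable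
    have hK' : Continuous fun z => fderiv ℝ (K z) p :=
      (ContDiff.fderiv (n := 0) (m := ∞) (hK.comp (contDiff_fst.prodMk contDiff_snd))
        contDiff_const (by simp)).continuous
    have hKz : ∀ z, Differentiable ℝ (K z) := fun z =>
      (hK.comp (contDiff_prodMk_right z)).differentiable (by simp)
    refine hasFDerivAt_integral_of_dominated_of_fderiv_le (bound := B1)
      (F' := fun p z => fderiv ℝ (K z) p) Filter.univ_mem
      (Filter.Eventually.of_forall hKp) ?_ hK'.aestronglyMeasurable ?_ hB1 ?_
    · refine hB0.mono' (hKp p) (Filter.Eventually.of_forall fun z => ?_)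
      simpa using hB0' z p
    · refine Filter.Eventually.of_forall fun z q _ => ?_
      simpa [norm_iteratedFDeriv_one] using hB1' z q
    · exact Filter.Eventually.of_forall fun z q _ => (hKz z q).hasFDerivAt
  induction m with
  | zero =>
    intro F _ _ K hK hB
    rw [Nat.cast_zero, contDiff_zero]
    exact continuous_iff_continuousAt.2 fun p => (key K hK hB p).continuousAt
  | succ m ih =>
    intro F _ _ K hK hB
    push_cast
    rw [contDiff_succ_iff_fderiv]
    refine ⟨fun p => (key K hK hB p).differentiableAt, by simp, ?_⟩
    have : fderiv ℝ (fun p => ∫ z, K z p ∂μ) = fun p => ∫ z, fderiv ℝ (K z) p ∂μ :=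
      funext fun p => (key K hK hB p).fderiv
    rw [this]
    refine ih (fun z => fderiv ℝ (K z)) ?_ fun j => ?_
    · exact ContDiff.fderiv (m := ∞) (n := ∞) (f := fun q : Z × P => K q.1)
        (hK.comp ((contDiff_fst.comp contDiff_fst).prodMk contDiff_snd)) contDiff_snd (by simp)
    · obtain ⟨B, hB, hB'⟩ := hB (j + 1)
      exact ⟨B, hB, fun z p => by rw [norm_iteratedFDeriv_fderiv]; exact hB' z p⟩

lemma norm_iteratedFDeriv_comp_clm_le {E F G : Type} [NormedAddCommGroup E] [NormedSpace ℝ E]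
    [NormedAddCommGroup F] [NormedSpace ℝ F] [NormedAddCommGroup G] [NormedSpace ℝ G]
    {g : F → G} (hg : ContDiff ℝ ∞ g) (L : E →L[ℝ] F) (j : ℕ) (x : E) :
    ‖iteratedFDeriv ℝ j (fun x => g (L x)) x‖ ≤ ‖iteratedFDeriv ℝ j g (L x)‖ * ‖L‖ ^ j := by
  have h := L.iteratedFDeriv_comp_right hg x (i := j) (by exact_mod_cast le_top)
  change ‖iteratedFDeriv ℝ j (g ∘ L) x‖ ≤ _
  rw [h]
  refine (ContinuousMultilinearMap.norm_compContinuousLinearMap_le _ _).trans ?_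
  simp

lemma iteratedDeriv_exp_mul_I (j : ℕ) :
    iteratedDeriv j (fun v : ℝ => Complex.exp (v * Complex.I)) =
      fun v : ℝ => Complex.I ^ j * Complex.exp (v * Complex.I) := by
  induction j with
  | zero => simp
  | succ j ih =>
    rw [iteratedDeriv_succ, ih]
    funext v
    have h : HasDerivAt (fun v : ℝ => (v : ℂ) * Complex.I) Complex.I v := by
      simpa using (Complex.ofRealCLM.hasDerivAt (x := v)).mul_const Complex.I
    rw [(h.cexp.const_mul (Complex.I ^ j)).deriv]
    ring

lemma contDiff_exp_mul_I : ContDiff ℝ ∞ (fun v : ℝ => Complex.exp (v * Complex.I)) :=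
  ((Complex.ofRealCLM.contDiff).mul contDiff_const).cexp

lemma exists_bound_mul_exp {c : ℝ → ℝ} (hc : ContDiff ℝ ∞ c)
    (hb : ∀ j : ℕ, ∃ C, ∀ u, |iteratedDeriv j c u| ≤ C) (j : ℕ) :
    ∃ C, ∀ q : ℝ × ℝ,
      ‖iteratedFDeriv ℝ j (fun q : ℝ × ℝ => (c q.1 : ℂ) * Complex.exp (q.2 * Complex.I)) q‖
        ≤ C := by
  choose C hC using hb
  have hcC : ContDiff ℝ ∞ (fun u => (c u : ℂ)) := Complex.ofRealCLM.contDiff.comp hc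
  have h1 : ∀ (i : ℕ) (q : ℝ × ℝ),
      ‖iteratedFDeriv ℝ i (fun q : ℝ × ℝ => (c q.1 : ℂ)) q‖ ≤ C i := by
    intro i q
    have hC0 : 0 ≤ C i := (abs_nonneg _).trans (hC i 0)
    refine (norm_iteratedFDeriv_comp_clm_le hcC (ContinuousLinearMap.fst ℝ ℝ ℝ) i q).trans ?_
    have e : ‖iteratedFDeriv ℝ i (fun u => (c u : ℂ)) q.1‖ = ‖iteratedFDeriv ℝ i c q.1‖ :=
      Complex.ofRealLI.norm_iteratedFDeriv_comp_left hc.contDiffAt (by exact_mod_cast le_top)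
    refine (mul_le_mul (b := C i) (d := 1) ?_ ?_ (by positivity) hC0).trans (by simp)
    · rw [ContinuousLinearMap.coe_fst', e, norm_iteratedFDeriv_eq_norm_iteratedDeriv]
      exact hC i _
    · exact pow_le_one₀ (norm_nonneg _) (ContinuousLinearMap.norm_fst_le ℝ ℝ ℝ)
  have h2 : ∀ (i : ℕ) (q : ℝ × ℝ),
      ‖iteratedFDeriv ℝ i (fun q : ℝ × ℝ => Complex.exp (q.2 * Complex.I)) q‖ ≤ 1 := by
    intro i q
    refine (norm_iteratedFDeriv_comp_clm_le contDiff_exp_mul_I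
      (ContinuousLinearMap.snd ℝ ℝ ℝ) i q).trans ?_
    refine mul_le_one₀ ?_ (by positivity)
      (pow_le_one₀ (norm_nonneg _) (ContinuousLinearMap.norm_snd_le ℝ ℝ ℝ))
    rw [norm_iteratedFDeriv_eq_norm_iteratedDeriv, iteratedDeriv_exp_mul_I]
    simp [Complex.norm_exp_ofReal_mul_I]
  refine ⟨∑ i ∈ Finset.range (j + 1), (j.choose i : ℝ) * C i * 1, fun q => ?_⟩
  refine (norm_iteratedFDeriv_mul_le (N := ∞) (hcC.comp contDiff_fst)
    (contDiff_exp_mul_I.comp contDiff_snd) q (by exact_mod_cast le_top)).trans ?_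
  refine Finset.sum_le_sum fun i _ => ?_
  have hC0 : 0 ≤ C i := (abs_nonneg _).trans (hC i 0)
  exact mul_le_mul (mul_le_mul_of_nonneg_left (h1 i q) (by positivity)) (h2 _ q)
    (norm_nonneg _) (by positivity)

section
variable {E : Type} [NormedAddCommGroup E] [InnerProductSpace ℝ E] [FiniteDimensional ℝ E]
  [MeasurableSpace E] [BorelSpace E]

/-- The integrals `∫ Φ(τ, ξ) c((2πτ)² u) exp(2πi ⟨ξ, x⟩)` are smooth in `(u, x)` when `Φ` is
rapidly decreasing and all derivatives of `c` are bounded. -/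
lemma contDiff_oscillatory {c : ℝ → ℝ} (hc : ContDiff ℝ ∞ c)
    (hb : ∀ j : ℕ, ∃ C, ∀ u, |iteratedDeriv j c u| ≤ C)
    (Φ : WithLp 2 (ℝ × E) → ℂ) (hΦ : ContDiff ℝ ∞ Φ)
    (hinteg : ∀ k : ℕ, Integrable (fun z => ‖z‖ ^ k * ‖Φ z‖)) :
    ContDiff ℝ ∞ (fun p : ℝ × E => ∫ z : WithLp 2 (ℝ × E),
      Φ z * ((c ((2 * Real.pi * z.fst) ^ 2 * p.1) : ℂ) *
        Complex.exp ((2 * Real.pi * inner ℝ z.snd p.2 : ℝ) * Complex.I))) := by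
  let G : ℝ × ℝ → ℂ := fun q => (c q.1 : ℂ) * Complex.exp (q.2 * Complex.I)
  have hG : ContDiff ℝ ∞ G :=
    ((Complex.ofRealCLM.contDiff.comp hc).comp contDiff_fst).mul
      (contDiff_exp_mul_I.comp contDiff_snd)
  let L : WithLp 2 (ℝ × E) → (ℝ × E →L[ℝ] ℝ × ℝ) := fun z =>
    (((2 * Real.pi * z.fst) ^ 2) • ContinuousLinearMap.fst ℝ ℝ E).prod
      ((2 * Real.pi) • (innerSL ℝ z.snd).comp (ContinuousLinearMap.snd ℝ ℝ E))
  have hfst : ∀ z : WithLp 2 (ℝ × E), ‖z.fst‖ ≤ ‖z‖ := fun z => WithLp.norm_fst_le _ z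
  have hsnd : ∀ z : WithLp 2 (ℝ × E), ‖z.snd‖ ≤ ‖z‖ := fun z => WithLp.norm_snd_le _ z
  have hL : ∀ z, ‖L z‖ ≤ (2 * Real.pi) ^ 2 * (1 + ‖z‖) ^ 2 := by
    intro z
    refine ContinuousLinearMap.opNorm_le_bound _ (by positivity) fun p => ?_
    have hpi : 1 ≤ 2 * Real.pi := by linarith [Real.pi_gt_three]
    have hz := norm_nonneg z
    refine max_le ?_ ?_
    · change ‖(2 * Real.pi * z.fst) ^ 2 * p.1‖ ≤ _
      have h1 := norm_fst_le p
      have h2 := hfst z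
      rw [norm_mul, norm_pow, norm_mul, mul_pow,
        Real.norm_of_nonneg (by positivity : (0:ℝ) ≤ 2 * Real.pi)]
      gcongr
      linarith
    · change ‖2 * Real.pi * inner ℝ z.snd p.2‖ ≤ _
      have h1 := norm_snd_le p
      have h2 := hsnd z
      rw [norm_mul, Real.norm_of_nonneg (by positivity : (0:ℝ) ≤ 2 * Real.pi)]
      calc 2 * Real.pi * ‖inner ℝ z.snd p.2‖ ≤ 2 * Real.pi * (‖z.snd‖ * ‖p.2‖) := by
            gcongr; exact norm_inner_le_norm _ _
        _ ≤ (2 * Real.pi) ^ 2 * ((1 + ‖z‖) ^ 2 * ‖p‖) := by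
            gcongr
            · exact le_self_pow₀ hpi (by norm_num)
            · nlinarith
        _ = _ := by ring
  let K : WithLp 2 (ℝ × E) → ℝ × E → ℂ := fun z p => Φ z * G (L z p)
  have hKs : ContDiff ℝ ∞ (Function.uncurry K) := by
    have hp1 : ContDiff ℝ ∞ (fun q : WithLp 2 (ℝ × E) × (ℝ × E) => q.1.fst) :=
      (WithLp.fstL 2 ℝ ℝ E).contDiff.comp contDiff_fst
    have hp2 : ContDiff ℝ ∞ (fun q : WithLp 2 (ℝ × E) × (ℝ × E) => q.1.snd) :=
      (WithLp.sndL 2 ℝ ℝ E).contDiff.comp contDiff_fst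
    refine (hΦ.comp contDiff_fst).mul (hG.comp (ContDiff.prodMk ?_ ?_))
    · exact ((contDiff_const.mul hp1).pow 2).mul (contDiff_fst.comp contDiff_snd)
    · exact contDiff_const.mul (hp2.inner ℝ (contDiff_snd.comp contDiff_snd))
  rw [contDiff_infty]
  intro m
  refine contDiff_integral_of_bound volume m K hKs fun j => ?_
  obtain ⟨C, hC⟩ := exists_bound_mul_exp hc hb j
  have hC0 : 0 ≤ C := (norm_nonneg _).trans (hC 0)
  refine ⟨fun z => (C * ((2 * Real.pi) ^ 2) ^ j * 2 ^ (2 * j - 1)) *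
    (‖z‖ ^ 0 * ‖Φ z‖ + ‖z‖ ^ (2 * j) * ‖Φ z‖),
    ((hinteg 0).add (hinteg (2 * j))).const_mul _, fun z p => ?_⟩
  have h1 : ‖iteratedFDeriv ℝ j (K z) p‖ ≤
      ‖Φ z‖ * ‖iteratedFDeriv ℝ j (fun p => G (L z p)) p‖ := by
    have : iteratedFDeriv ℝ j (K z) p = Φ z • iteratedFDeriv ℝ j (fun p => G (L z p)) p :=
      iteratedFDeriv_const_smul_apply (a := Φ z) (f := fun p => G (L z p)) (i := j)
        ((hG.comp (L z).contDiff).contDiffAt.of_le (by exact_mod_cast le_top))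
    rw [this, norm_smul]
  have h2 : (1 + ‖z‖) ^ (2 * j) ≤ 2 ^ (2 * j - 1) * (1 ^ (2 * j) + ‖z‖ ^ (2 * j)) :=
    add_pow_le zero_le_one (norm_nonneg z) _
  calc _ ≤ _ := h1
    _ ≤ ‖Φ z‖ * (C * ((2 * Real.pi) ^ 2 * (1 + ‖z‖) ^ 2) ^ j) := by
      gcongr
      refine (norm_iteratedFDeriv_comp_clm_le hG (L z) j p).trans ?_
      gcongr
      · exact hC _
      · exact hL z
    _ = ‖Φ z‖ * (C * ((2 * Real.pi) ^ 2) ^ j * (1 + ‖z‖) ^ (2 * j)) := by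
      rw [mul_pow _ ((1 + ‖z‖) ^ 2), ← pow_mul (1 + ‖z‖)]; ring
    _ ≤ ‖Φ z‖ * (C * ((2 * Real.pi) ^ 2) ^ j *
          (2 ^ (2 * j - 1) * (1 ^ (2 * j) + ‖z‖ ^ (2 * j)))) := by gcongr
    _ = _ := by ring

/-- Smooth version of the splitting into an even and an odd part: `f(t, x) = a(t², x) + t b(t², x)`
with `a`, `b` smooth across `t² = 0`. In the Fourier inversion formula, `cos(2πτt)` is replaced by
`c((2πτ)² u)` and `sin(2πτt)` by `-2 (2πτ) t (deriv c)((2πτ)² u)`, with `u = t²` and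
`c(s²) = cos s`. -/
lemma exists_even_odd {f : ℝ × E → ℝ} (hf : ContDiff ℝ ∞ f) (hs : HasCompactSupport f) :
    ∃ a b : ℝ × E → ℝ, ContDiff ℝ ∞ a ∧ ContDiff ℝ ∞ b ∧
      ∀ t x, f (t, x) = a (t ^ 2, x) + t * b (t ^ 2, x) := by
  obtain ⟨c, hc, hct, hcb⟩ := exists_cos_sqrt
  have hcd : ∀ t, Real.sin t = -2 * t * deriv c (t ^ 2) := by
    intro t
    have h1 : HasDerivAt (fun t => c (t ^ 2)) (deriv c (t ^ 2) * (2 * t)) t := by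
      have := ((hc.differentiable (by simp)) (t ^ 2)).hasDerivAt.comp t (hasDerivAt_pow 2 t)
      exact this.congr_deriv (by simp)
    have h2 : HasDerivAt (fun t => c (t ^ 2)) (-Real.sin t) t := by
      simp_rw [hct]; exact Real.hasDerivAt_cos t
    linarith [h1.unique h2]
  have hc' : ContDiff ℝ ∞ (deriv c) := (contDiff_infty_iff_deriv.1 hc).2
  have hcb' : ∀ j : ℕ, ∃ C, ∀ u, |iteratedDeriv j (deriv c) u| ≤ C := fun j => by
    simpa only [iteratedDeriv_succ'] using hcb (j + 1)
  let e := (WithLp.prodContinuousLinearEquiv 2 ℝ ℝ E)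
  let fC : WithLp 2 (ℝ × E) → ℂ := fun z => (f (e z) : ℂ)
  have hfC : ContDiff ℝ ∞ fC := Complex.ofRealCLM.contDiff.comp (hf.comp e.contDiff)
  have hfCs : HasCompactSupport fC :=
    (hs.comp_homeomorph e.toHomeomorph).comp_left (g := fun u : ℝ => (u : ℂ)) (by simp)
  let S : SchwartzMap (WithLp 2 (ℝ × E)) ℂ := hfCs.toSchwartzMap hfC
  let φ : SchwartzMap (WithLp 2 (ℝ × E)) ℂ := FourierTransform.fourier S
  have hinv : FourierTransformInv.fourierInv φ = S := FourierTransform.fourierInv_fourier_eq S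
  let w : WithLp 2 (ℝ × E) → ℂ := fun z => -2 * Complex.I * (2 * Real.pi * z.fst : ℝ)
  have hw : ContDiff ℝ ∞ w := by
    refine contDiff_const.mul (Complex.ofRealCLM.contDiff.comp (contDiff_const.mul ?_))
    exact (WithLp.fstL 2 ℝ ℝ E).contDiff
  have hφ : ContDiff ℝ ∞ φ := φ.smooth ⊤
  have hintegφ : ∀ k : ℕ, Integrable (fun z => ‖z‖ ^ k * ‖φ z‖) := fun k =>
    φ.integrable_pow_mul volume k
  have hintw : ∀ k : ℕ, Integrable (fun z => ‖z‖ ^ k * ‖w z * φ z‖) := by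
    intro k
    refine ((hintegφ (k + 1)).const_mul (2 * (2 * Real.pi))).mono'
      (Continuous.aestronglyMeasurable ?_) (Filter.Eventually.of_forall fun z => ?_)
    · exact (continuous_norm.pow k).mul (hw.continuous.mul hφ.continuous).norm
    · have hwz : ‖w z‖ ≤ 2 * (2 * Real.pi) * ‖z‖ := by
        simp only [w, norm_mul, norm_neg, Complex.norm_I, Complex.norm_real, Complex.norm_ofNat]
        rw [Real.norm_of_nonneg Real.pi_pos.le, Real.norm_of_nonneg (zero_le_two)]
        have := WithLp.norm_fst_le _ z
        have hpi := Real.pi_pos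
        rw [mul_one, ← mul_assoc]
        gcongr
      rw [Real.norm_of_nonneg (by positivity), norm_mul]
      calc _ ≤ ‖z‖ ^ k * (2 * (2 * Real.pi) * ‖z‖ * ‖φ z‖) := by gcongr
        _ = _ := by ring
  have ha := contDiff_oscillatory hc hcb φ hφ hintegφ
  have hb := contDiff_oscillatory hc' hcb' (fun z => w z * φ z) (hw.mul hφ) hintw
  refine ⟨_, _, Complex.reCLM.contDiff.comp ha, Complex.reCLM.contDiff.comp hb, fun t x => ?_⟩
  have h0 : (f (t, x) : ℂ) = FourierTransformInv.fourierInv (φ : WithLp 2 (ℝ × E) → ℂ)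
      (WithLp.toLp 2 (t, x)) := by
    rw [← SchwartzMap.fourierInv_coe, hinv]; rfl
  have hi : ∀ (c : ℝ → ℝ) (hc : ContDiff ℝ ∞ c) (hcb : ∃ C, ∀ u, |c u| ≤ C)
      (Φ : WithLp 2 (ℝ × E) → ℂ) (hΦ : ContDiff ℝ ∞ Φ) (hinteg : Integrable (fun z => ‖Φ z‖)),
      Integrable (fun z : WithLp 2 (ℝ × E) =>
        Φ z * ((c ((2 * Real.pi * z.fst) ^ 2 * t ^ 2) : ℂ) *
        Complex.exp ((2 * Real.pi * inner ℝ z.snd x : ℝ) * Complex.I))) := by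
    rintro c hc ⟨C, hC⟩ Φ hΦ hinteg
    refine (hinteg.mul_const C).mono' (Continuous.aestronglyMeasurable ?_)
      (Filter.Eventually.of_forall fun z => ?_)
    · have h1 : Continuous (fun z : WithLp 2 (ℝ × E) => z.fst) := (WithLp.fstL 2 ℝ ℝ E).continuous
      have h2 : Continuous (fun z : WithLp 2 (ℝ × E) => z.snd) := (WithLp.sndL 2 ℝ ℝ E).continuous
      have h3 := hc.continuous
      have h4 := hΦ.continuous
      fun_prop
    · rw [norm_mul, norm_mul, Complex.norm_exp_ofReal_mul_I, mul_one, Complex.norm_real]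
      gcongr
      exact hC _
  have hia := hi c hc (by simpa using hcb 0) φ hφ (by simpa using hintegφ 0)
  have hib := hi (deriv c) hc' (by simpa using hcb' 0) (fun z => w z * φ z) (hw.mul hφ)
    (by simpa using hintw 0)
  have hpt : ∀ z : WithLp 2 (ℝ × E),
      Complex.exp ((2 * Real.pi * inner ℝ z (WithLp.toLp 2 (t, x)) : ℝ) * Complex.I) • φ z =
      φ z * ((c ((2 * Real.pi * z.fst) ^ 2 * t ^ 2) : ℂ) *
        Complex.exp ((2 * Real.pi * inner ℝ z.snd x : ℝ) * Complex.I)) +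
      t * (w z * φ z * ((deriv c ((2 * Real.pi * z.fst) ^ 2 * t ^ 2) : ℝ) *
        Complex.exp ((2 * Real.pi * inner ℝ z.snd x : ℝ) * Complex.I))) := by
    intro z
    have hin : inner ℝ z (WithLp.toLp 2 (t, x)) = t * z.fst + inner ℝ z.snd x := by
      simp [WithLp.prod_inner_apply]
    have hsin := hcd (2 * Real.pi * z.fst * t)
    have hcos := hct (2 * Real.pi * z.fst * t)
    rw [mul_pow] at hsin hcos
    have hexp : Complex.exp ((2 * Real.pi * inner ℝ z (WithLp.toLp 2 (t, x)) : ℝ) * Complex.I) =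
        ((Real.cos (2 * Real.pi * z.fst * t) : ℂ) +
          (Real.sin (2 * Real.pi * z.fst * t) : ℂ) * Complex.I) *
        Complex.exp ((2 * Real.pi * inner ℝ z.snd x : ℝ) * Complex.I) := by
      rw [Complex.ofReal_cos, Complex.ofReal_sin, ← Complex.exp_mul_I, ← Complex.exp_add, hin]
      congr 1
      push_cast
      ring
    simp only [smul_eq_mul]
    rw [hexp, ← hcos, hsin]
    simp only [w]
    push_cast
    ring
  have key := ((h0.trans (Real.fourierInv_eq' _ _)).trans
    (integral_congr_ae (Filter.Eventually.of_forall hpt))).trans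
      (integral_add hia (hib.const_mul (t : ℂ)))
  rw [integral_const_mul] at key
  have := congrArg Complex.re key
  rw [Complex.ofReal_re, Complex.add_re, Complex.re_ofReal_mul] at this
  exact this

/-- Localized version of `exists_even_odd` for a function on `ℝ × U`, obtained by cutting off. -/
lemma exists_local_even_odd {U : Set E} (hU : IsOpen U)
    {ψ : ℝ → E → ℝ}
    (hψ : ContDiffOn ℝ ∞ (fun p : ℝ × E => ψ p.1 p.2) (univ ×ˢ U)) {x₀ : E} (hx₀ : x₀ ∈ U)
    {M : ℝ} (hM : 0 < M) :
    ∃ a b : ℝ × E → ℝ, ContDiff ℝ ∞ a ∧ ContDiff ℝ ∞ b ∧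
      ∀ᶠ x in nhds x₀, ∀ t, |t| ≤ M → ψ t x = a (t ^ 2, x) + t * b (t ^ 2, x) := by
  obtain ⟨ρ, hρ, hρU⟩ := Metric.nhds_basis_closedBall.mem_iff.1 (hU.mem_nhds hx₀)
  let β₁ : ContDiffBump (0 : ℝ) := ⟨M, M + 1, hM, by linarith⟩
  let β₂ : ContDiffBump x₀ := ⟨ρ / 2, ρ, by positivity, by linarith⟩
  let f : ℝ × E → ℝ := fun p => β₁ p.1 * β₂ p.2 * ψ p.1 p.2
  have hf : ContDiff ℝ ∞ f := by
    rw [contDiff_iff_contDiffAt]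
    rintro ⟨t, x⟩
    by_cases hx : x ∈ U
    · exact (((β₁.contDiff.comp contDiff_fst).mul (β₂.contDiff.comp contDiff_snd)).contDiffAt).mul
        (hψ.contDiffAt ((isOpen_univ.prod hU).mem_nhds ⟨mem_univ _, hx⟩))
    · have hx' : x ∈ (Metric.closedBall x₀ ρ)ᶜ := fun h => hx (hρU h)
      refine (contDiffAt_const (c := (0 : ℝ))).congr_of_eventuallyEq ?_
      have : ∀ᶠ p : ℝ × E in nhds (t, x), p.2 ∈ (Metric.closedBall x₀ ρ)ᶜ :=
        continuous_snd.continuousAt.eventually_mem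
          (Metric.isClosed_closedBall.isOpen_compl.mem_nhds hx')
      filter_upwards [this] with p hp
      simp only [f]
      rw [β₂.zero_of_le_dist (by simpa using (le_of_lt (by simpa using hp : ρ < dist p.2 x₀)))]
      simp
  have hfs : HasCompactSupport f := by
    refine HasCompactSupport.intro
      ((isCompact_closedBall (0 : ℝ) (M + 1)).prod (isCompact_closedBall x₀ ρ)) ?_
    rintro ⟨t, x⟩ hp
    simp only [f]
    rw [mem_prod, not_and_or] at hp
    rcases hp with hp | hp
    · rw [β₁.zero_of_le_dist (le_of_lt (by simpa using hp))]
      simp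
    · rw [β₂.zero_of_le_dist (le_of_lt (by simpa using hp))]
      simp
  obtain ⟨a, b, ha, hb, hab⟩ := exists_even_odd hf hfs
  refine ⟨a, b, ha, hb, ?_⟩
  filter_upwards [Metric.closedBall_mem_nhds x₀ (show 0 < ρ / 2 by positivity)] with x hx t ht
  rw [← hab]
  simp only [f]
  rw [β₁.one_of_mem_closedBall (by simpa using ht), β₂.one_of_mem_closedBall hx]
  simp
end

/-! ### Flatness along a direction of increase of `r` -/

section
variable {E : Type} [NormedAddCommGroup E] [InnerProductSpace ℝ E]

lemma hasDerivAt_comp_line {U : Set E} (hU : IsOpen U) {f : E → ℝ} (hf : ContDiffOn ℝ ∞ f U)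
    {x v : E} {σ : ℝ} (hx : x + σ • v ∈ U) :
    HasDerivAt (fun s : ℝ => f (x + s • v)) (fderiv ℝ f (x + σ • v) v) σ := by
  have h1 : HasDerivAt (fun s : ℝ => x + s • v) v σ := by
    simpa using ((hasDerivAt_id σ).smul_const v).const_add x
  have h2 : HasFDerivAt f (fderiv ℝ f (x + σ • v)) (x + σ • v) :=
    ((hf.contDiffAt (hU.mem_nhds hx)).differentiableAt (by simp)).hasFDerivAt
  exact h2.comp_hasDerivAt σ h1

lemma segment_mem_ball {x₀ x v : E} {R σ τ : ℝ} (hx : x ∈ Metric.ball x₀ R)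
    (hy : x + τ • v ∈ Metric.ball x₀ R) (h0 : 0 ≤ σ) (h1 : σ ≤ τ) :
    x + σ • v ∈ Metric.ball x₀ R := by
  rcases h0.eq_or_lt with rfl | h0
  · simpa using hx
  · have hτ : 0 < τ := h0.trans_le h1
    have := (convex_ball x₀ R).add_smul_mem hx hy (t := σ / τ)
      ⟨by positivity, (div_le_one hτ).2 h1⟩
    rwa [smul_smul, div_mul_cancel₀ _ hτ.ne'] at this

/-- If `∂ᵥ r ≥ c` on a ball, then `r` grows at rate at least `c` along `v`. -/
lemma add_mul_le_of_le_fderiv {U : Set E} (hU : IsOpen U) {r : E → ℝ} (hr : ContDiffOn ℝ ∞ r U)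
    {x₀ v : E} {c R : ℝ} (hRU : Metric.ball x₀ R ⊆ U)
    (hv : ∀ x ∈ Metric.ball x₀ R, c ≤ fderiv ℝ r x v) {x : E} {σ : ℝ} (hσ : 0 ≤ σ)
    (hx : x ∈ Metric.ball x₀ R) (hy : x + σ • v ∈ Metric.ball x₀ R) :
    r x + c * σ ≤ r (x + σ • v) := by
  have hd : ∀ s ∈ Icc 0 σ, HasDerivAt (fun s : ℝ => r (x + s • v)) (fderiv ℝ r (x + s • v) v) s :=
    fun s hs => hasDerivAt_comp_line hU hr (hRU (segment_mem_ball hx hy hs.1 hs.2))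
  have := (convex_Icc 0 σ).mul_sub_le_image_sub_of_le_deriv
    (f := fun s : ℝ => r (x + s • v)) (C := c)
    (fun s hs => (hd s hs).continuousAt.continuousWithinAt)
    (fun s hs => (hd s (interior_subset hs)).differentiableAt.differentiableWithinAt)
    (fun s hs => by
      have hs' := interior_subset hs
      rw [(hd s hs').deriv]
      exact hv _ (segment_mem_ball hx hy hs'.1 hs'.2))
    0 (left_mem_Icc.2 hσ) σ (right_mem_Icc.2 hσ) hσ
  simp only [zero_smul, add_zero, sub_zero] at this
  linarith

/-- If `A` vanishes on `H ∩ {r > 0}`, then also on `H ∩ {r ≥ 0}`, since moving along `v` from a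
zero of `r` in `H` leads into `H ∩ {r > 0}`. -/
lemma vanish_of_pos {U : Set E} (hU : IsOpen U) {r : E → ℝ} (hr : ContDiffOn ℝ ∞ r U)
    {x₀ v : E} {c R : ℝ} (hc : 0 < c) (hRU : Metric.ball x₀ R ⊆ U)
    (hv : ∀ x ∈ Metric.ball x₀ R, c ≤ fderiv ℝ r x v) {H : Set E}
    (hH : ∀ x ∈ H, x ∈ Metric.ball x₀ R → ∀ σ : ℝ, 0 ≤ σ → x + σ • v ∈ Metric.ball x₀ R →
      x + σ • v ∈ H) {A : E → ℝ} (hA : ContDiffOn ℝ ∞ A U)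
    (hA0 : ∀ x ∈ H, x ∈ Metric.ball x₀ R → 0 < r x → A x = 0) :
    ∀ x ∈ H, x ∈ Metric.ball x₀ R → 0 ≤ r x → A x = 0 := by
  intro x hxH hx hrx
  have hcont : Continuous fun s : ℝ => x + s • v := by fun_prop
  have hev : ∀ᶠ s : ℝ in nhds 0, x + s • v ∈ Metric.ball x₀ R :=
    hcont.continuousAt.eventually_mem (Metric.isOpen_ball.mem_nhds (by simpa using hx))
  have hd : Filter.Tendsto (fun s : ℝ => A (x + s • v)) (nhdsWithin 0 (Ioi 0)) (nhds (A x)) := by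
    have := (hasDerivAt_comp_line (σ := 0) (v := v) hU hA (x := x)
      (by simpa using hRU hx)).continuousAt.tendsto
    simp only [zero_smul, add_zero] at this
    exact this.mono_left nhdsWithin_le_nhds
  refine tendsto_nhds_unique hd (Filter.Tendsto.congr' ?_ tendsto_const_nhds)
  filter_upwards [nhdsWithin_le_nhds hev, self_mem_nhdsWithin] with s hs hs0
  have hs0 : 0 < s := hs0
  refine (hA0 _ (hH x hxH hx s hs0.le hs) hs ?_).symm
  have := add_mul_le_of_le_fderiv hU hr hRU hv hs0.le hx hs
  have := mul_pos hc hs0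
  linarith

variable [FiniteDimensional ℝ E]

/-- If `A` vanishes on `H ∩ {r ≥ 0}`, then `A = O((-r)ᴺ)` on `H ∩ {r < 0}` for every `N`, near
`x₀`. By induction on `N`: the derivative `∂ᵥ A` vanishes on `H ∩ {r ≥ 0}` too, and the mean value
theorem is applied on the segment from `x` to `x + (-r(x) / c) v`, at whose end `r ≥ 0`; the
segment is required to stay in the ball. -/
lemma flat_estimate {U : Set E} (hU : IsOpen U) {r : E → ℝ} (hr : ContDiffOn ℝ ∞ r U)
    {x₀ v : E} {c R : ℝ} (hc : 0 < c) (hRU : Metric.closedBall x₀ R ⊆ U)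
    (hv : ∀ x ∈ Metric.ball x₀ R, c ≤ fderiv ℝ r x v) {H : Set E}
    (hH : ∀ x ∈ H, x ∈ Metric.ball x₀ R → ∀ σ : ℝ, 0 ≤ σ → x + σ • v ∈ Metric.ball x₀ R →
      x + σ • v ∈ H) (N : ℕ) :
    ∀ A : E → ℝ, ContDiffOn ℝ ∞ A U →
      (∀ x ∈ H, x ∈ Metric.ball x₀ R → 0 ≤ r x → A x = 0) →
      ∃ C, 0 ≤ C ∧ ∀ x ∈ H, x ∈ Metric.ball x₀ R →
        x + (max (-r x) 0 / c) • v ∈ Metric.ball x₀ R → |A x| ≤ C * (max (-r x) 0) ^ N := by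
  have hRU' := Metric.ball_subset_closedBall.trans hRU
  induction N with
  | zero =>
    intro A hA _
    obtain ⟨C, hC⟩ := (isCompact_closedBall x₀ R).exists_bound_of_continuousOn
      (hA.continuousOn.mono hRU)
    refine ⟨|C|, abs_nonneg _, fun x _ hx _ => ?_⟩
    rw [pow_zero, mul_one]
    exact (hC x (Metric.ball_subset_closedBall hx)).trans (le_abs_self C)
  | succ N ih =>
    intro A hA hA0
    have hD : ContDiffOn ℝ ∞ (fun x => fderiv ℝ A x v) U :=
      (hA.fderiv_of_isOpen hU (m := ∞) (by simp)).clm_apply contDiffOn_const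
    have hD0 : ∀ x ∈ H, x ∈ Metric.ball x₀ R → 0 ≤ r x → fderiv ℝ A x v = 0 := by
      intro x hxH hx hrx
      have hd : HasDerivAt (fun s : ℝ => A (x + s • v)) (fderiv ℝ A x v) 0 := by
        have := hasDerivAt_comp_line (σ := 0) (v := v) hU hA (x := x) (by simpa using hRU' hx)
        simpa using this
      have hev : ∀ᶠ s : ℝ in nhds 0, x + s • v ∈ Metric.ball x₀ R := by
        have hcont : Continuous fun s : ℝ => x + s • v := by fun_prop
        exact hcont.continuousAt.eventually_mem (Metric.isOpen_ball.mem_nhds (by simpa using hx))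
      have h0 : HasDerivWithinAt (fun s : ℝ => A (x + s • v)) 0 (Ici 0) 0 := by
        refine (hasDerivWithinAt_const (0 : ℝ) (Ici 0) (0 : ℝ)).congr_of_eventuallyEq ?_ ?_
        · filter_upwards [nhdsWithin_le_nhds hev, self_mem_nhdsWithin] with s hs hs0
          have hs0 : 0 ≤ s := hs0
          refine hA0 _ (hH x hxH hx s hs0 hs) hs ?_
          have := add_mul_le_of_le_fderiv hU hr hRU' hv hs0 hx hs
          have := mul_nonneg hc.le hs0
          linarith
        · simpa using hA0 x hxH hx hrx
      exact (uniqueDiffWithinAt_Ici (0 : ℝ)).eq_deriv _ hd.hasDerivWithinAt h0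
    obtain ⟨C, hC0, hC⟩ := ih _ hD hD0
    refine ⟨C / c, by positivity, fun x hxH hx hxy => ?_⟩
    rcases le_or_gt 0 (r x) with hrx | hrx
    · rw [hA0 x hxH hx hrx, abs_zero]
      positivity
    · rw [max_eq_left (by linarith)] at hxy ⊢
      set τ := -r x / c with hτ
      have hτ0 : 0 ≤ τ := div_nonneg (by linarith) hc.le
      have hcτ : c * τ = -r x := by rw [hτ]; field_simp
      have hend : A (x + τ • v) = 0 := by
        refine hA0 _ (hH x hxH hx τ hτ0 hxy) hxy ?_
        have := add_mul_le_of_le_fderiv hU hr hRU' hv hτ0 hx hxy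
        linarith
      have hmv := (convex_Icc 0 τ).norm_image_sub_le_of_norm_hasDerivWithin_le
        (f := fun s : ℝ => A (x + s • v)) (f' := fun s => fderiv ℝ A (x + s • v) v)
        (C := C * (-r x) ^ N)
        (fun s hs => (hasDerivAt_comp_line hU hA
          (hRU' (segment_mem_ball hx hxy hs.1 hs.2))).hasDerivWithinAt)
        (fun s hs => by
          have hsb := segment_mem_ball hx hxy hs.1 hs.2
          have hinc := add_mul_le_of_le_fderiv hU hr hRU' hv hs.1 hx hsb
          have hcs := mul_nonneg hc.le hs.1
          have hmax : max (-r (x + s • v)) 0 ≤ -r x - c * s := by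
            refine max_le (by linarith) ?_
            have := mul_le_mul_of_nonneg_left hs.2 hc.le
            linarith
          refine (hC _ (hH x hxH hx s hs.1 hsb) hsb ?_).trans ?_
          · rw [add_assoc, ← add_smul]
            refine segment_mem_ball hx hxy (add_nonneg hs.1 (by positivity)) ?_
            have : max (-r (x + s • v)) 0 / c ≤ (-r x - c * s) / c := by gcongr
            have e : (-r x - c * s) / c = τ - s := by rw [hτ]; field_simp
            linarith
          · gcongr
            linarith)
        (left_mem_Icc.2 hτ0) (right_mem_Icc.2 hτ0)
      simp only [hend, zero_smul, add_zero, zero_sub, norm_neg, sub_zero, Real.norm_eq_abs,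
        abs_of_nonneg hτ0] at hmv
      calc |A x| ≤ _ := hmv
        _ = _ := by rw [hτ]; ring
end

/-! ### Local solutions -/

/-- The triples `(p, q, γ)` allowed as values of `(ψ₀, ψ₁, g)` at the point `x`: those for which
the interpolation conditions and the quadratic inequality hold at `x`, if `x` lies in `H`. -/
def admissible {E : Type} (H : Set E) (r f₀ f₁ f₂ : E → ℝ) (ψ : ℝ → E → ℝ) (x : E) :
    Set (ℝ × ℝ × ℝ) :=
  {w | x ∈ H → (r x = 0 → w.1 = ψ 0 x ∧ w.2.1 = deriv (fun t : ℝ => ψ t x) 0) ∧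
    ∀ t : ℝ, f₀ x + f₁ x * t + f₂ x * t ^ 2 + (w.1 + t * w.2.1) ^ 2 ≤ w.2.2 * (t ^ 2 - r x)}

/-- The square is convex and the other terms are affine in `(p, q, γ)`. -/
lemma convex_admissible {E : Type} (H : Set E) (r f₀ f₁ f₂ : E → ℝ) (ψ : ℝ → E → ℝ) (x : E) :
    Convex ℝ (admissible H r f₀ f₁ f₂ ψ x) := by
  rintro ⟨p, q, γ⟩ hw ⟨p', q', γ'⟩ hw' a b ha hb hab hx
  obtain ⟨h1, h2⟩ := hw hx
  obtain ⟨h1', h2'⟩ := hw' hx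
  refine ⟨fun hr => ?_, fun t => ?_⟩
  · obtain ⟨e1, e2⟩ := h1 hr
    obtain ⟨e1', e2'⟩ := h1' hr
    simp only at e1 e2 e1' e2'
    simp only [Prod.smul_mk, Prod.mk_add_mk, smul_eq_mul, e1, e2, e1', e2', ← add_mul, hab,
      one_mul, and_self]
  · have h := h2 t
    have h' := h2' t
    simp only [Prod.smul_mk, Prod.mk_add_mk, smul_eq_mul] at h h' ⊢
    have e1 := mul_le_mul_of_nonneg_left h ha
    have e2 := mul_le_mul_of_nonneg_left h' hb
    have e3 := mul_nonneg (mul_nonneg ha hb) (sq_nonneg ((p + t * q) - (p' + t * q')))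
    obtain rfl : b = 1 - a := by linarith
    nlinarith

/-- A quadratic polynomial which equals `-(p + t q)²` at the two roots of `t² = ρ > 0` has its
remainder modulo `t² - ρ`, after adding this square, equal to zero. -/
lemma remainder_eq_zero {ρ c₀ c₁ c₂ p q : ℝ} (hρ : 0 < ρ)
    (h : ∀ t : ℝ, t ^ 2 = ρ → c₀ + c₁ * t + c₂ * t ^ 2 = -(p + t * q) ^ 2) :
    c₀ + p ^ 2 + ρ * (c₂ + q ^ 2) = 0 ∧ c₁ + 2 * p * q = 0 := by
  have hs := Real.sq_sqrt hρ.le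
  have hs0 := Real.sqrt_pos.2 hρ
  set s := √ρ
  have h1 := h s hs
  have h2 := h (-s) (by rw [neg_sq, hs])
  rw [← hs]
  constructor
  · linarith
  · have : s * (c₁ + 2 * p * q) = 0 := by linarith
    exact (mul_eq_zero.1 this).resolve_left hs0.ne'

section
variable {E : Type} [NormedAddCommGroup E] [InnerProductSpace ℝ E]

/-- Where `r < 0` the factor `t² - r` is bounded below by a multiple of `1 + t²`, so that a large
constant `g` works. -/
lemma exists_local_of_neg {U H : Set E} (hU : IsOpen U) {r f₀ f₁ f₂ : E → ℝ} {ψ : ℝ → E → ℝ}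
    (hr : ContDiffOn ℝ ∞ r U) (hf₀ : ContDiffOn ℝ ∞ f₀ U) (hf₁ : ContDiffOn ℝ ∞ f₁ U)
    (hf₂ : ContDiffOn ℝ ∞ f₂ U) {x₀ : E} (hx₀ : x₀ ∈ U) (hneg : r x₀ < 0) :
    ∃ w : E → ℝ × ℝ × ℝ, ContDiffOn ℝ ∞ w U ∧
      ∀ᶠ x in nhds x₀, w x ∈ admissible H r f₀ f₁ f₂ ψ x := by
  have hn := hU.mem_nhds hx₀
  set δ := -r x₀ / 2 with hδ
  have hδ0 : 0 < δ := by linarith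
  set M := |f₀ x₀| + |f₁ x₀| + |f₂ x₀| + 1 with hM
  have hM0 : 0 < M := by positivity
  refine ⟨fun _ => (0, 0, 3 / 2 * M * (1 + 1 / δ)), contDiffOn_const, ?_⟩
  have hrc : ∀ᶠ x in nhds x₀, r x < -δ :=
    (hr.continuousOn.continuousAt hn).eventually_lt_const (by linarith)
  have hfc : ∀ᶠ x in nhds x₀, |f₀ x| + |f₁ x| + |f₂ x| < M :=
    (((hf₀.continuousOn.continuousAt hn).abs.add (hf₁.continuousOn.continuousAt hn).abs).add
      (hf₂.continuousOn.continuousAt hn).abs).eventually_lt_const (by simp [hM])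
  filter_upwards [hrc, hfc] with x hrx hfx _
  refine ⟨fun h0 => by linarith, fun t => ?_⟩
  simp only [mul_zero, add_zero, ne_eq, OfNat.ofNat_ne_zero, not_false_eq_true, zero_pow]
  have ht : |t| ≤ (1 + t ^ 2) / 2 := by
    have := sq_nonneg (|t| - 1)
    have := sq_abs t
    nlinarith
  have h0 : f₀ x ≤ |f₀ x| * (1 + t ^ 2) := by
    have := le_abs_self (f₀ x)
    have := mul_nonneg (abs_nonneg (f₀ x)) (sq_nonneg t)
    linarith
  have h1 : f₁ x * t ≤ |f₁ x| * (1 + t ^ 2) := by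
    have e1 := le_abs_self (f₁ x * t)
    rw [abs_mul] at e1
    have e2 := mul_le_mul_of_nonneg_left ht (abs_nonneg (f₁ x))
    have := mul_nonneg (abs_nonneg (f₁ x)) (sq_nonneg t)
    have := abs_nonneg (f₁ x)
    linarith
  have h2 : f₂ x * t ^ 2 ≤ |f₂ x| * (1 + t ^ 2) := by
    have := mul_le_mul_of_nonneg_right (le_abs_self (f₂ x)) (sq_nonneg t)
    have := abs_nonneg (f₂ x)
    linarith
  have h3 : (|f₀ x| + |f₁ x| + |f₂ x|) * (1 + t ^ 2) ≤ 3 / 2 * M * (1 + t ^ 2) := by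
    gcongr
    linarith
  have h4 : 1 + t ^ 2 ≤ (1 + 1 / δ) * (t ^ 2 - r x) := by
    have e : (1 + 1 / δ) * (t ^ 2 + δ) = t ^ 2 + δ + t ^ 2 / δ + 1 := by field_simp; ring
    have e' : (1 + 1 / δ) * (t ^ 2 + δ) ≤ (1 + 1 / δ) * (t ^ 2 - r x) := by gcongr; linarith
    have : 0 ≤ t ^ 2 / δ := by positivity
    linarith
  have h5 := mul_le_mul_of_nonneg_left h4 (show 0 ≤ 3 / 2 * M by positivity)
  linarith

variable [FiniteDimensional ℝ E]

/-- Where `r ≥ 0`, the even-odd decomposition of `ψ` yields candidates for `ψ₀, ψ₁` whose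
remainder modulo `t² - r` vanishes on `{r > 0}`. -/
lemma exists_local_candidates [MeasurableSpace E] [BorelSpace E] {U H : Set E} (hU : IsOpen U)
    {r f₀ f₁ f₂ : E → ℝ} {ψ : ℝ → E → ℝ}
    (hr : ContDiffOn ℝ ∞ r U)
    (hψ : ContDiffOn ℝ ∞ (fun p : ℝ × E => ψ p.1 p.2) (univ ×ˢ U))
    (hFψ : ∀ t : ℝ, ∀ x ∈ U ∩ H, t ^ 2 = r x →
      f₀ x + f₁ x * t + f₂ x * t ^ 2 = -(ψ t x) ^ 2)
    {x₀ : E} (hx₀ : x₀ ∈ U) (hpos : 0 ≤ r x₀) :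
    ∃ p q : E → ℝ, ContDiffOn ℝ ∞ p U ∧ ContDiffOn ℝ ∞ q U ∧
      ∀ᶠ x in nhds x₀, (r x = 0 → p x = ψ 0 x ∧ q x = deriv (fun t : ℝ => ψ t x) 0) ∧
        (x ∈ H → 0 < r x →
          f₀ x + p x ^ 2 + r x * (f₂ x + q x ^ 2) = 0 ∧ f₁ x + 2 * p x * q x = 0) := by
  have hn := hU.mem_nhds hx₀
  have hM : 0 < r x₀ + 1 := by linarith
  obtain ⟨a, b, ha, hb, hab⟩ := exists_local_even_odd hU hψ hx₀ hM
  have hrx : ContDiffOn ℝ ∞ (fun x => (r x, x)) U := hr.prodMk contDiffOn_id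
  have hrc : ∀ᶠ x in nhds x₀, r x < (r x₀ + 1) ^ 2 :=
    (hr.continuousOn.continuousAt hn).eventually_lt_const (by nlinarith)
  refine ⟨fun x => a (r x, x), fun x => b (r x, x), ha.comp_contDiffOn hrx,
    hb.comp_contDiffOn hrx, ?_⟩
  filter_upwards [hab, hrc, hn] with x hx hrx hxU
  refine ⟨fun h0 => ?_, fun hxH hrpos => ?_⟩
  · simp only [h0]
    refine ⟨by simpa using (hx 0 (by simpa using hM.le)).symm, ?_⟩
    have hev : (fun t : ℝ => ψ t x) =ᶠ[nhds 0] fun t => a (t ^ 2, x) + t * b (t ^ 2, x) := by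
      filter_upwards [Metric.closedBall_mem_nhds (0 : ℝ) hM] with t ht
      exact hx t (by simpa using ht)
    have hsq : HasDerivAt (fun t : ℝ => (t ^ 2, x)) ((0 : ℝ), (0 : E)) 0 := by
      have := (hasDerivAt_pow 2 (0 : ℝ)).prodMk (hasDerivAt_const (0 : ℝ) x)
      simpa using this
    have hda : HasDerivAt (fun t : ℝ => a (t ^ 2, x)) 0 0 := by
      have := ((ha.differentiable (by simp)) ((0 : ℝ) ^ 2, x)).hasFDerivAt.comp_hasDerivAt
        (0 : ℝ) hsq
      rwa [← Prod.zero_eq_mk, map_zero] at this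
    have hdb : HasDerivAt (fun t : ℝ => b (t ^ 2, x)) 0 0 := by
      have := ((hb.differentiable (by simp)) ((0 : ℝ) ^ 2, x)).hasFDerivAt.comp_hasDerivAt
        (0 : ℝ) hsq
      rwa [← Prod.zero_eq_mk, map_zero] at this
    have hd := (hda.add ((hasDerivAt_id (0 : ℝ)).mul hdb)).congr_of_eventuallyEq hev
    rw [hd.deriv]
    simp
  · refine remainder_eq_zero hrpos fun t ht => ?_
    rw [hFψ t x ⟨hxU, hxH⟩ ht, hx t ?_, ht]
    exact abs_le_of_sq_le_sq (by rw [ht]; exact hrx.le) hM.le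

/-- The local solution near a zero of `r` in `H`. The remainder `A + B t` of the candidates
vanishes on `{r ≥ 0}`; it is flat there along `v`, so that on `{r < 0}` it is at most
`h(-r) (t² - r)` for a suitable flat function `h`, which is added to `g`. -/
lemma exists_local_of_eq_zero [MeasurableSpace E] [BorelSpace E] {U H : Set E} (hU : IsOpen U)
    {r f₀ f₁ f₂ : E → ℝ} {ψ : ℝ → E → ℝ}
    (hr : ContDiffOn ℝ ∞ r U) (hf₀ : ContDiffOn ℝ ∞ f₀ U) (hf₁ : ContDiffOn ℝ ∞ f₁ U)
    (hf₂ : ContDiffOn ℝ ∞ f₂ U)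
    (hψ : ContDiffOn ℝ ∞ (fun p : ℝ × E => ψ p.1 p.2) (univ ×ˢ U))
    (hFψ : ∀ t : ℝ, ∀ x ∈ U ∩ H, t ^ 2 = r x →
      f₀ x + f₁ x * t + f₂ x * t ^ 2 = -(ψ t x) ^ 2)
    {x₀ v : E} {R₀ : ℝ} (hx₀ : x₀ ∈ U) (h0 : r x₀ = 0) (hR₀ : 0 < R₀)
    (hv : 0 < fderiv ℝ r x₀ v)
    (hH : ∀ x ∈ H, x ∈ Metric.ball x₀ R₀ → ∀ σ : ℝ, 0 ≤ σ → x + σ • v ∈ Metric.ball x₀ R₀ →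
      x + σ • v ∈ H) :
    ∃ w : E → ℝ × ℝ × ℝ, ContDiffOn ℝ ∞ w U ∧
      ∀ᶠ x in nhds x₀, w x ∈ admissible H r f₀ f₁ f₂ ψ x := by
  have hn := hU.mem_nhds hx₀
  obtain ⟨p, q, hp, hq, hpq⟩ := exists_local_candidates hU hr hψ hFψ hx₀ h0.ge
  set c := fderiv ℝ r x₀ v / 2 with hc
  have hc0 : 0 < c := by positivity
  have hdc : ∀ᶠ x in nhds x₀, c < fderiv ℝ r x v := by
    have h1 : ContDiffOn ℝ ∞ (fun x => fderiv ℝ r x v) U :=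
      (hr.fderiv_of_isOpen hU (m := ∞) (by simp)).clm_apply contDiffOn_const
    exact (h1.continuousOn.continuousAt hn).eventually_const_lt (by linarith)
  obtain ⟨R, hR, hRs⟩ := Metric.nhds_basis_closedBall.mem_iff.1
    (((hpq.and hdc).and hn).and (Metric.ball_mem_nhds x₀ hR₀))
  have hRU : Metric.closedBall x₀ R ⊆ U := fun x hx => (hRs hx).1.2
  have hb := Metric.ball_subset_closedBall (x := x₀) (ε := R)
  have hv' : ∀ x ∈ Metric.ball x₀ R, c ≤ fderiv ℝ r x v := fun x hx => (hRs (hb hx)).1.1.2.le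
  have hH' : ∀ x ∈ H, x ∈ Metric.ball x₀ R → ∀ σ : ℝ, 0 ≤ σ → x + σ • v ∈ Metric.ball x₀ R →
      x + σ • v ∈ H :=
    fun x hxH hx σ hσ hy => hH x hxH (hRs (hb hx)).2 σ hσ (hRs (hb hy)).2
  set A : E → ℝ := fun x => f₀ x + p x ^ 2 + r x * (f₂ x + q x ^ 2) with hA
  set B : E → ℝ := fun x => f₁ x + 2 * p x * q x with hB
  have hAs : ContDiffOn ℝ ∞ A U := (hf₀.add (hp.pow 2)).add (hr.mul (hf₂.add (hq.pow 2)))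
  have hBs : ContDiffOn ℝ ∞ B U := hf₁.add ((contDiffOn_const.mul hp).mul hq)
  have hA0 := vanish_of_pos hU hr hc0 (hb.trans hRU) hv' hH' hAs
    fun x hxH hx hrx => ((hRs (hb hx)).1.1.1.2 hxH hrx).1
  have hB0 := vanish_of_pos hU hr hc0 (hb.trans hRU) hv' hH' hBs
    fun x hxH hx hrx => ((hRs (hb hx)).1.1.1.2 hxH hrx).2
  choose CA hCA0 hCA using fun N => flat_estimate hU hr hc0 hRU hv' hH' N A hAs hA0
  choose CB hCB0 hCB using fun N => flat_estimate hU hr hc0 hRU hv' hH' N B hBs hB0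
  obtain ⟨h, hh, hhneg, hhpos, hhle⟩ := exists_flat_majorant
    (fun N => CA (N + 1) + CB (N + 1)) fun N => add_nonneg (hCA0 _) (hCB0 _)
  refine ⟨fun x => (p x, q x, f₂ x + q x ^ 2 + h (-r x)), hp.prodMk (hq.prodMk
    ((hf₂.add (hq.pow 2)).add (hh.comp_contDiffOn hr.neg))), ?_⟩
  have hrc := hr.continuousOn.continuousAt hn
  have hr1 : ∀ᶠ x in nhds x₀, -1 < r x := hrc.eventually_const_lt (by linarith)
  -- The estimate along `v` needs the endpoint of the segment to stay in the ball.
  have hend : ∀ᶠ x in nhds x₀, x + (max (-r x) 0 / c) • v ∈ Metric.ball x₀ R := by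
    have hcont : ContinuousAt (fun x => x + (max (-r x) 0 / c) • v) x₀ :=
      continuousAt_id.add (((hrc.neg.max continuousAt_const).div_const c).smul continuousAt_const)
    refine hcont.eventually_mem (Metric.isOpen_ball.mem_nhds ?_)
    simpa [h0] using hR
  filter_upwards [hr1, hend, Metric.ball_mem_nhds x₀ hR] with x hrx hxe hxR hxH
  refine ⟨(hRs (hb hxR)).1.1.1.1, fun t => ?_⟩
  suffices hsuff : A x + B x * t ≤ h (-r x) * (t ^ 2 - r x) by
    simp only [hA, hB] at hsuff
    linarith
  rcases le_or_gt 0 (r x) with hx0 | hx0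
  · rw [hA0 x hxH hxR hx0, hB0 x hxH hxR hx0, hhneg _ (by linarith)]
    simp
  set s := -r x with hs
  have hs0 : 0 < s := by linarith
  have hmax : max s 0 = s := max_eq_left hs0.le
  have key : (|A x| + |B x|) / s ≤ h s := by
    refine hhle s _ hs0 (by linarith) fun N => ?_
    rw [div_le_iff₀ hs0]
    have e1 := hCA (N + 1) x hxH hxR hxe
    have e2 := hCB (N + 1) x hxH hxR hxe
    rw [← hs, hmax] at e1 e2
    calc |A x| + |B x| ≤ _ := add_le_add e1 e2
      _ = _ := by ring
  rw [div_le_iff₀ hs0] at key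
  have e1 : B x * t ≤ |B x| * (1 + t ^ 2) := by
    have e2 := le_abs_self (B x * t)
    rw [abs_mul] at e2
    have ht : |t| ≤ 1 + t ^ 2 := by
      have := sq_nonneg (|t| - 1)
      have := sq_abs t
      nlinarith [abs_nonneg t]
    exact e2.trans (mul_le_mul_of_nonneg_left ht (abs_nonneg _))
  have e3 : |B x| ≤ h s := by
    have e4 : h s * s ≤ h s := mul_le_of_le_one_right (hhpos s) (by linarith)
    have := abs_nonneg (A x)
    linarith
  have e5 := mul_le_mul_of_nonneg_right e3 (sq_nonneg t)
  have e6 : h s * (t ^ 2 - r x) = h s * t ^ 2 + h s * s := by rw [hs]; ring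
  have := le_abs_self (A x)
  linarith

/-- Local solvability, under the assumption that each zero of `r` in `H` has a direction along
which `r` increases and `H` is locally preserved. -/
lemma exists_local [MeasurableSpace E] [BorelSpace E] {U H : Set E} (hU : IsOpen U)
    (hHc : IsClosed H) {r f₀ f₁ f₂ : E → ℝ} {ψ : ℝ → E → ℝ}
    (hr : ContDiffOn ℝ ∞ r U) (hf₀ : ContDiffOn ℝ ∞ f₀ U) (hf₁ : ContDiffOn ℝ ∞ f₁ U)
    (hf₂ : ContDiffOn ℝ ∞ f₂ U)
    (hψ : ContDiffOn ℝ ∞ (fun p : ℝ × E => ψ p.1 p.2) (univ ×ˢ U))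
    (hFψ : ∀ t : ℝ, ∀ x ∈ U ∩ H, t ^ 2 = r x →
      f₀ x + f₁ x * t + f₂ x * t ^ 2 = -(ψ t x) ^ 2)
    (hdir : ∀ x₀ ∈ U ∩ H, r x₀ = 0 → ∃ v : E, ∃ R₀ : ℝ, 0 < R₀ ∧ 0 < fderiv ℝ r x₀ v ∧
      ∀ x ∈ H, x ∈ Metric.ball x₀ R₀ → ∀ σ : ℝ, 0 ≤ σ → x + σ • v ∈ Metric.ball x₀ R₀ →
        x + σ • v ∈ H)
    {x₀ : E} (hx₀ : x₀ ∈ U) :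
    ∃ w : E → ℝ × ℝ × ℝ, ContDiffOn ℝ ∞ w U ∧
      ∀ᶠ x in nhds x₀, w x ∈ admissible H r f₀ f₁ f₂ ψ x := by
  by_cases hxH : x₀ ∈ H
  swap
  · refine ⟨fun _ => 0, contDiffOn_const, ?_⟩
    filter_upwards [hHc.isOpen_compl.mem_nhds hxH] with x hx hx'
    exact absurd hx' hx
  rcases lt_trichotomy (r x₀) 0 with hlt | heq | hgt
  · exact exists_local_of_neg hU hr hf₀ hf₁ hf₂ hx₀ hlt
  · obtain ⟨v, R₀, hR₀, hv, hH⟩ := hdir x₀ ⟨hx₀, hxH⟩ heq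
    exact exists_local_of_eq_zero hU hr hf₀ hf₁ hf₂ hψ hFψ hx₀ heq hR₀ hv hH
  · obtain ⟨p, q, hp, hq, hpq⟩ := exists_local_candidates hU hr hψ hFψ hx₀ hgt.le
    refine ⟨fun x => (p x, q x, f₂ x + q x ^ 2), hp.prodMk (hq.prodMk (hf₂.add (hq.pow 2))), ?_⟩
    filter_upwards [hpq, (hr.continuousOn.continuousAt (hU.mem_nhds hx₀)).eventually_const_lt hgt]
      with x hx hrx hxH
    refine ⟨hx.1, fun t => le_of_eq ?_⟩
    obtain ⟨hA, hB⟩ := hx.2 hxH hrx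
    simp only
    linear_combination hA + t * hB

/-! ### Gluing and the choice of the direction -/

open scoped Manifold in
/-- Smooth selection from convex sets on an open set: local solutions are glued with a smooth
partition of unity. -/
lemma exists_contDiffOn_of_local {F : Type} [NormedAddCommGroup F] [NormedSpace ℝ F]
    {U : Set E} (hU : IsOpen U) {S : E → Set F} (hS : ∀ x, Convex ℝ (S x))
    (hloc : ∀ x₀ ∈ U, ∃ w : E → F, ContDiffOn ℝ ∞ w U ∧ ∀ᶠ x in nhds x₀, w x ∈ S x) :
    ∃ w : E → F, ContDiffOn ℝ ∞ w U ∧ ∀ x ∈ U, w x ∈ S x := by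
  let O : TopologicalSpace.Opens E := ⟨U, hU⟩
  have : SigmaCompactSpace O := by
    have : LocallyCompactSpace O := hU.locallyCompactSpace
    infer_instance
  obtain ⟨g, hg⟩ := exists_contMDiffMap_forall_mem_convex_of_local (M := O) (n := ⊤) 𝓘(ℝ, E)
    (t := fun x : O => S x) (fun x => hS x) (by
      rintro ⟨x₀, hx₀⟩
      obtain ⟨w, hw, hwS⟩ := hloc x₀ hx₀
      refine ⟨{x : O | w x ∈ S x},
        (continuous_subtype_val.tendsto (⟨x₀, hx₀⟩ : O)).eventually hwS,
        fun x => w x, ?_, fun y hy => hy⟩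
      refine ContMDiff.contMDiffOn ?_
      exact hw.contMDiffOn.comp_contMDiff contMDiff_subtype_val (fun x => x.2))
  classical
  refine ⟨fun x => if hx : x ∈ U then g ⟨x, hx⟩ else 0, ?_, fun x hx => ?_⟩
  · intro x hx
    refine ContDiffAt.contDiffWithinAt ?_
    rw [← contMDiffAt_iff_contDiffAt]
    have := (contMDiffAt_subtype_iff (U := O) (I := 𝓘(ℝ, E)) (I' := 𝓘(ℝ, F)) (n := ∞)
      (f := fun x => if hx : x ∈ U then g ⟨x, hx⟩ else 0) (x := ⟨x, hx⟩)).1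
    refine this ?_
    refine (g.contMDiff ⟨x, hx⟩).congr_of_eventuallyEq (Filter.Eventually.of_forall fun y => ?_)
    exact dif_pos y.2
  · simp only [dif_pos hx]
    exact hg ⟨x, hx⟩
end

/-- At a zero of `r` in the half-space there is a direction along which `r` increases and which
does not leave the half-space: a tangential one if `dr` has a nonzero tangential component, and
otherwise the direction of the first axis. -/
lemma exists_direction {n : ℕ} (i : Fin n) {r : EuclideanSpace ℝ (Fin n) → ℝ}
    {x₀ : EuclideanSpace ℝ (Fin n)} (hx₀ : 0 ≤ x₀ i) (hd : fderiv ℝ r x₀ ≠ 0)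
    (hd1 : x₀ i = 0 → (∀ j, j ≠ i → fderiv ℝ r x₀ (EuclideanSpace.single j 1) = 0) →
      0 < fderiv ℝ r x₀ (EuclideanSpace.single i 1)) :
    ∃ v : EuclideanSpace ℝ (Fin n), ∃ R₀ : ℝ, 0 < R₀ ∧ 0 < fderiv ℝ r x₀ v ∧
      ∀ x ∈ {x : EuclideanSpace ℝ (Fin n) | 0 ≤ x i}, x ∈ Metric.ball x₀ R₀ → ∀ σ : ℝ, 0 ≤ σ →
        x + σ • v ∈ Metric.ball x₀ R₀ → x + σ • v ∈ {x : EuclideanSpace ℝ (Fin n) | 0 ≤ x i} := by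
  set L := fderiv ℝ r x₀ with hL
  by_cases hj : ∃ j, j ≠ i ∧ L (EuclideanSpace.single j 1) ≠ 0
  · obtain ⟨j, hji, hj⟩ := hj
    refine ⟨L (EuclideanSpace.single j 1) • EuclideanSpace.single j 1, 1, one_pos, ?_, ?_⟩
    · rw [map_smul, smul_eq_mul]
      exact mul_self_pos.2 hj
    · intro x hx _ σ _ _
      simpa [hji.symm] using hx
  push Not at hj
  rcases hx₀.eq_or_lt with h0 | hpos
  · refine ⟨EuclideanSpace.single i 1, 1, one_pos, hd1 h0.symm hj, ?_⟩
    intro x hx _ σ hσ _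
    have hx : 0 ≤ x i := hx
    have hy : 0 ≤ x i + σ := add_nonneg hx hσ
    simpa using hy
  · have hi : L (EuclideanSpace.single i 1) ≠ 0 := by
      intro hi
      refine hd (ContinuousLinearMap.coe_injective ?_)
      refine (EuclideanSpace.basisFun (Fin n) ℝ).toBasis.ext fun k => ?_
      by_cases hk : k = i
      · simpa [hk] using hi
      · simpa using hj k hk
    have hev : ∀ᶠ x : EuclideanSpace ℝ (Fin n) in nhds x₀, 0 < x i := by
      have hc : Continuous fun x : EuclideanSpace ℝ (Fin n) => x i := by fun_prop
      exact hc.continuousAt.eventually_const_lt hpos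
    obtain ⟨R₀, hR₀, hR⟩ := Metric.nhds_basis_ball.mem_iff.1 hev
    refine ⟨L (EuclideanSpace.single i 1) • EuclideanSpace.single i 1, R₀, hR₀, ?_, ?_⟩
    · rw [map_smul, smul_eq_mul]
      exact mul_self_pos.2 hi
    · intro x _ _ σ _ hy
      have hy' : 0 < (x + σ • L (EuclideanSpace.single i 1) •
        (EuclideanSpace.single i 1 : EuclideanSpace ℝ (Fin n))) i := hR hy
      exact hy'.le

end

/-- **Hörmander's division lemma (Lemma 24.4.3).**
On `X = U ∩ {x₁ ≥ 0}`, if `dr ≠ 0` on `{r = 0} ∩ X` and `∂r/∂x₁ > 0` at points of `X` where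
`r = x₁ = 0` and `∂r/∂x_j = 0` for `j ≠ 1`, and if the quadratic polynomial
`F(t,x) = f₀(x) + f₁(x)t + f₂(x)t²` equals `−ψ(t,x)²` whenever `x ∈ X` and `t² = r(x)`,
then there exist smooth `ψ₀, ψ₁, g` on `U` with `ψ₀(x) = ψ(0,x)`, `ψ₁(x) = ∂_tψ(0,x)` on
`{r = 0} ∩ X`, and `F(t,x) + (ψ₀(x) + tψ₁(x))² ≤ g(x)(t² − r(x))` for all `t ∈ ℝ`, `x ∈ X`. -/
theorem stmt_6 (n : ℕ) (hn : 0 < n) (U : Set (EuclideanSpace ℝ (Fin n))) (hU : IsOpen U)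
    (r : EuclideanSpace ℝ (Fin n) → ℝ) (hr : ContDiffOn ℝ (⊤ : ℕ∞) r U)
    (hdr : ∀ x ∈ U ∩ {x : EuclideanSpace ℝ (Fin n) | 0 ≤ x ⟨0, hn⟩}, r x = 0 →
      fderiv ℝ r x ≠ 0)
    (hdr1 : ∀ x ∈ U ∩ {x : EuclideanSpace ℝ (Fin n) | 0 ≤ x ⟨0, hn⟩}, r x = 0 →
      x ⟨0, hn⟩ = 0 →
      (∀ j : Fin n, j ≠ ⟨0, hn⟩ → fderiv ℝ r x (EuclideanSpace.single j 1) = 0) →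
      0 < fderiv ℝ r x (EuclideanSpace.single ⟨0, hn⟩ 1))
    (f₀ f₁ f₂ : EuclideanSpace ℝ (Fin n) → ℝ)
    (hf₀ : ContDiffOn ℝ (⊤ : ℕ∞) f₀ U) (hf₁ : ContDiffOn ℝ (⊤ : ℕ∞) f₁ U) (hf₂ : ContDiffOn ℝ (⊤ : ℕ∞) f₂ U)
    (ψ : ℝ → EuclideanSpace ℝ (Fin n) → ℝ)
    (hψ : ContDiffOn ℝ (⊤ : ℕ∞) (fun p : ℝ × EuclideanSpace ℝ (Fin n) => ψ p.1 p.2)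
      (Set.univ ×ˢ U))
    (hFψ : ∀ (t : ℝ), ∀ x ∈ U ∩ {x : EuclideanSpace ℝ (Fin n) | 0 ≤ x ⟨0, hn⟩},
      t ^ 2 = r x → f₀ x + f₁ x * t + f₂ x * t ^ 2 = -(ψ t x) ^ 2) :
    ∃ ψ₀ ψ₁ g : EuclideanSpace ℝ (Fin n) → ℝ,
      ContDiffOn ℝ (⊤ : ℕ∞) ψ₀ U ∧ ContDiffOn ℝ (⊤ : ℕ∞) ψ₁ U ∧ ContDiffOn ℝ (⊤ : ℕ∞) g U ∧
      (∀ x ∈ U ∩ {x : EuclideanSpace ℝ (Fin n) | 0 ≤ x ⟨0, hn⟩}, r x = 0 →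
        ψ₀ x = ψ 0 x ∧ ψ₁ x = deriv (fun t : ℝ => ψ t x) 0) ∧
      ∀ (t : ℝ), ∀ x ∈ U ∩ {x : EuclideanSpace ℝ (Fin n) | 0 ≤ x ⟨0, hn⟩},
        f₀ x + f₁ x * t + f₂ x * t ^ 2 + (ψ₀ x + t * ψ₁ x) ^ 2 ≤ g x * (t ^ 2 - r x) := by
  have hHc : IsClosed {x : EuclideanSpace ℝ (Fin n) | 0 ≤ x ⟨0, hn⟩} :=
    isClosed_le continuous_const (by fun_prop)
  obtain ⟨w, hw, hwS⟩ := exists_contDiffOn_of_local hU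
    (S := admissible {x : EuclideanSpace ℝ (Fin n) | 0 ≤ x ⟨0, hn⟩} r f₀ f₁ f₂ ψ)
    (fun x => convex_admissible _ _ _ _ _ _ x)
    (fun x₀ hx₀ => exists_local hU hHc hr hf₀ hf₁ hf₂ hψ hFψ
      (fun x hx h0 => exists_direction ⟨0, hn⟩ hx.2 (hdr x hx h0) (hdr1 x hx h0)) hx₀)
  exact ⟨fun x => (w x).1, fun x => (w x).2.1, fun x => (w x).2.2, hw.fst, hw.snd.fst,
    hw.snd.snd, fun x hx => (hwS x hx.1 hx.2).1, fun t x hx => (hwS x hx.1 hx.2).2 t⟩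
end

section
/- Define χ : ℝ → ℝ by χ(u) = exp(1/(u − 3/4)) for u < 3/4 and χ(u) = 0 for u ≥ 3/4. Then χ is infinitely differentiable on ℝ, nonnegative, and nonincreasing; moreover, for every N ∈ ℕ, every ρ > 1, and every compact set K ⊂ ℝ, there exists a constant C > 0 such that |χ^{(N)}(u)| ≤ C (−χ'(u))^{1/ρ} for every u ∈ K. -/
/-!
With `x = 3/4 - u`, the cutoff is `χ(u) = g(x)`, where `g = expNegInvGlue` is Mathlib's flat
function (`g(x) = exp (-1/x)` for `x > 0`, zero otherwise); smoothness, sign and monotonicity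
follow. Each derivative has the form `χ^{(N)}(u) = p_N(1/x) g(x)` with `p_N` a polynomial
(`iteratedDeriv_chiMS_eq`), and `-χ'(u) = x⁻² g(x)` (`neg_deriv_chiMS`).

Put `s = 1/ρ` and `c = 1 - s > 0`. For `x > 0`, `g(x) = exp (-c/x) * g(x) ^ s`, so
`χ^{(N)}(u) = p_N(1/x) exp (-c/x) x^{2s} * (-χ'(u)) ^ s`. The factor in front extends to a
continuous function of `u ∈ ℝ`, because exponential decay beats the polynomial as `x → 0⁺`; hence
it is bounded on compact sets. For `x ≤ 0` both sides of the inequality vanish.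
-/

open Real

/-- The cutoff `χ(u) = exp(1/(u − 3/4))` for `u < 3/4`, `χ(u) = 0` for `u ≥ 3/4`. -/
noncomputable def chiMS (u : ℝ) : ℝ := if u < 3 / 4 then Real.exp (1 / (u - 3 / 4)) else 0

theorem chiMS_eq (u : ℝ) : chiMS u = expNegInvGlue (3 / 4 - u) := by
  unfold chiMS expNegInvGlue
  by_cases h : u < 3 / 4
  · rw [if_pos h, if_neg (by linarith), ← inv_neg, one_div, neg_sub]
  · rw [if_neg h, if_pos (by linarith)]

open Polynomial in
theorem hasDerivAt_polynomial_mul_reflected (p : ℝ[X]) (u : ℝ) :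
    HasDerivAt (fun u : ℝ => p.eval (3 / 4 - u)⁻¹ * expNegInvGlue (3 / 4 - u))
      ((-(X ^ 2 * (p - derivative p))).eval (3 / 4 - u)⁻¹ * expNegInvGlue (3 / 4 - u)) u := by
  have h := (expNegInvGlue.hasDerivAt_polynomial_eval_inv_mul p (3 / 4 - u)).comp u
    ((hasDerivAt_id u).const_sub (3 / 4))
  refine h.congr_deriv ?_
  rw [eval_neg]
  ring

open Polynomial in
theorem iteratedDeriv_chiMS_eq (N : ℕ) : ∃ p : ℝ[X],
    iteratedDeriv N chiMS = fun u => p.eval (3 / 4 - u)⁻¹ * expNegInvGlue (3 / 4 - u) := by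
  induction N with
  | zero =>
    refine ⟨1, ?_⟩
    funext u
    simp [chiMS_eq]
  | succ N ih =>
    obtain ⟨p, hp⟩ := ih
    refine ⟨-(X ^ 2 * (p - derivative p)), ?_⟩
    funext u
    rw [iteratedDeriv_succ, hp]
    exact (hasDerivAt_polynomial_mul_reflected p u).deriv

theorem neg_deriv_chiMS (u : ℝ) :
    -(deriv chiMS u) = (3 / 4 - u)⁻¹ ^ 2 * expNegInvGlue (3 / 4 - u) := by
  have h := (hasDerivAt_polynomial_mul_reflected 1 u).deriv
  have e : chiMS = fun u : ℝ =>
      (1 : Polynomial ℝ).eval (3 / 4 - u)⁻¹ * expNegInvGlue (3 / 4 - u) := by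
    funext v
    simp [chiMS_eq]
  rw [← e] at h
  rw [h]
  simp

/-- The quotient `p(1/x) g(x) / (x⁻² g(x)) ^ s` is, for `x > 0`, equal to a function continuous on
all of `ℝ`. Since `exp (-c/x) = g(x/c)` with `c = 1 - s`, that function is
`q((x/c)⁻¹) g(x/c) x^{2s}`, where `q(y) = p(y/c)`. -/
theorem exists_continuous_factor (p : Polynomial ℝ) {s : ℝ} (hs0 : 0 < s) (hs1 : s < 1) :
    ∃ F : ℝ → ℝ, Continuous F ∧ ∀ x, 0 < x →
      p.eval x⁻¹ * expNegInvGlue x = F x * (x⁻¹ ^ 2 * expNegInvGlue x) ^ s := by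
  have hc : 0 < 1 - s := by linarith
  let q : Polynomial ℝ := p.comp (Polynomial.C (1 - s)⁻¹ * Polynomial.X)
  refine ⟨fun x => q.eval (x / (1 - s))⁻¹ * expNegInvGlue (x / (1 - s)) * (x ^ 2) ^ s, ?_, ?_⟩
  · refine Continuous.mul ?_ ?_
    · exact (expNegInvGlue.continuous_polynomial_eval_inv_mul q).comp
        (continuous_id.div_const (1 - s))
    · exact (continuous_pow 2).rpow_const fun _ => Or.inr hs0.le
  · intro x hx
    have hq : q.eval (x / (1 - s))⁻¹ = p.eval x⁻¹ := by
      simp only [q, Polynomial.eval_comp, Polynomial.eval_mul, Polynomial.eval_C,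
        Polynomial.eval_X]
      congr 1
      field_simp
    have hg : expNegInvGlue x = Real.exp (-x⁻¹) := by
      simp [expNegInvGlue, not_le.2 hx]
    have hgc : expNegInvGlue (x / (1 - s)) = Real.exp (-x⁻¹ * (1 - s)) := by
      have hxc : 0 < x / (1 - s) := div_pos hx hc
      rw [expNegInvGlue, if_neg (not_le.2 hxc)]
      congr 1
      field_simp
    have hpow : (x ^ 2) ^ s * (x⁻¹ ^ 2 * Real.exp (-x⁻¹)) ^ s = Real.exp (-x⁻¹ * s) := by
      rw [← Real.mul_rpow (by positivity) (by positivity), ← mul_assoc, ← mul_pow,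
        mul_inv_cancel₀ hx.ne', one_pow, one_mul, ← Real.exp_mul]
    beta_reduce
    rw [hq, hgc, hg, mul_assoc, hpow, mul_assoc, ← Real.exp_add]
    congr 2
    ring

/-- **Properties of the flat cutoff `χ`.**
`χ` is smooth, nonnegative and nonincreasing, and for every `N ∈ ℕ`, `ρ > 1` and compact
`K ⊆ ℝ` there is `C > 0` with `|χ^{(N)}(u)| ≤ C (−χ'(u))^{1/ρ}` for all `u ∈ K`. -/
theorem stmt_7 :
    ContDiff ℝ (⊤ : ℕ∞) chiMS ∧ (∀ u : ℝ, 0 ≤ chiMS u) ∧ Antitone chiMS ∧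
      ∀ (N : ℕ) (ρ : ℝ), 1 < ρ → ∀ K : Set ℝ, IsCompact K →
        ∃ C > 0, ∀ u ∈ K, |iteratedDeriv N chiMS u| ≤ C * (-(deriv chiMS u)) ^ (1 / ρ) := by
  have hchi : chiMS = fun u => expNegInvGlue (3 / 4 - u) := funext chiMS_eq
  refine ⟨?_, fun u => ?_, fun u v huv => ?_, ?_⟩
  · rw [hchi]
    exact expNegInvGlue.contDiff.comp (contDiff_const.sub contDiff_id)
  · rw [chiMS_eq]
    exact expNegInvGlue.nonneg _
  · rw [chiMS_eq, chiMS_eq]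
    exact expNegInvGlue.monotone (by linarith)
  · intro N ρ hρ K hK
    obtain ⟨p, hp⟩ := iteratedDeriv_chiMS_eq N
    have hs0 : 0 < 1 / ρ := by positivity
    have hs1 : 1 / ρ < 1 := by
      rw [div_lt_one (by linarith)]
      exact hρ
    obtain ⟨F, hF, hFeq⟩ := exists_continuous_factor p hs0 hs1
    have hcont : Continuous fun u : ℝ => F (3 / 4 - u) := hF.comp (continuous_const.sub continuous_id)
    obtain ⟨B, hB⟩ := hK.exists_bound_of_continuousOn hcont.continuousOn
    -- `B` may fail to be positive (for instance when `K` is empty).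
    refine ⟨max B 1, lt_max_of_lt_right one_pos, fun u hu => ?_⟩
    rw [neg_deriv_chiMS, hp]
    have hnn : 0 ≤ (3 / 4 - u)⁻¹ ^ 2 * expNegInvGlue (3 / 4 - u) :=
      mul_nonneg (sq_nonneg _) (expNegInvGlue.nonneg _)
    have hr := Real.rpow_nonneg hnn (1 / ρ)
    rcases le_or_gt (3 / 4 - u) 0 with hx | hx
    · have h0 : |p.eval (3 / 4 - u)⁻¹ * expNegInvGlue (3 / 4 - u)| = 0 := by
        rw [expNegInvGlue.zero_of_nonpos hx, mul_zero, abs_zero]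
      exact h0.trans_le (mul_nonneg (le_max_of_le_right zero_le_one) hr)
    · simp only [hFeq _ hx]
      rw [abs_mul, abs_of_nonneg hr]
      exact mul_le_mul_of_nonneg_right ((hB u hu).trans (le_max_left _ _)) hr
end

section
/- There exists an infinitely differentiable function β : ℝ → ℝ with the following properties: 0 ≤ β ≤ 1 on ℝ; β(u) = 0 for all u ≤ −1; β is strictly increasing on the interval (−1, −1/2); β(u) = 1 for all u ≥ −1/2; and for every N ∈ ℕ, every ρ > 1, and every compact set K ⊂ ℝ, there exists a constant C > 0 such that |β^{(N)}(u)| ≤ C β(u)^{1/ρ} for every u ∈ K. -/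
open Real

/-!
The switch is `β u = smoothTransition (2 (u + 1))`, where
`smoothTransition x = E x / (E x + E (1 - x))` and `E = expNegInvGlue`, i.e. `E x = exp (-1/x)`
for `x > 0` and `0` otherwise.

The derivative bound rests on two facts. Every derivative of `E` has the form `p (1/x) E x` with
`p` a polynomial. Moreover, if `1/ρ + 1/σ = 1` then `E x = E (ρ x) * E (σ x)`, and
`E (ρ x) = (E x) ^ (1/ρ)`; hence `p (1/x) E x = (p (1/x) E (σ x)) * (E x) ^ (1/ρ)`, where the first
factor is continuous and so bounded on compact sets. The Leibniz rule transfers this bound to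
`E * g` for any smooth `g`, in particular to `smoothTransition`, with `g` the inverse of the
denominator; since that denominator is at most `2`, `E` is at most `2 * smoothTransition`.
-/

open Polynomial in
lemma iteratedDeriv_expNegInvGlue (n : ℕ) :
    ∃ p : ℝ[X], iteratedDeriv n expNegInvGlue = fun x ↦ p.eval x⁻¹ * expNegInvGlue x := by
  induction n with
  | zero => exact ⟨1, by simp⟩
  | succ n ih =>
    obtain ⟨p, hp⟩ := ih
    refine ⟨X ^ 2 * (p - derivative p), ?_⟩
    rw [iteratedDeriv_succ, hp]
    funext x
    exact (expNegInvGlue.hasDerivAt_polynomial_eval_inv_mul p x).deriv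

lemma expNegInvGlue_rpow {ρ : ℝ} (hρ : 0 < ρ) (x : ℝ) :
    expNegInvGlue x ^ (1 / ρ) = expNegInvGlue (ρ * x) := by
  rcases le_or_gt x 0 with hx | hx
  · rw [expNegInvGlue.zero_of_nonpos hx,
      expNegInvGlue.zero_of_nonpos (mul_nonpos_of_nonneg_of_nonpos hρ.le hx),
      Real.zero_rpow (by positivity)]
  · have h : 0 < ρ * x := mul_pos hρ hx
    simp only [expNegInvGlue, hx.not_ge, h.not_ge, if_false]
    rw [← Real.exp_mul]
    congr 1
    field_simp

/-- The splitting `E = E ^ (1/ρ) * E ^ (1/σ)`, with the power `1/σ` written as a dilation. -/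
lemma expNegInvGlue_split {ρ σ : ℝ} (h : ρ.HolderConjugate σ) (x : ℝ) :
    expNegInvGlue x = expNegInvGlue (σ * x) * expNegInvGlue x ^ (1 / ρ) := by
  rw [← expNegInvGlue_rpow h.symm.pos]
  rcases le_or_gt x 0 with hx | hx
  · rw [expNegInvGlue.zero_of_nonpos hx, Real.zero_rpow (one_div_pos.2 h.pos).ne', mul_zero]
  · rw [← Real.rpow_add (expNegInvGlue.pos_of_pos hx), one_div, one_div, add_comm,
      h.inv_add_inv_eq_one, Real.rpow_one]

open Polynomial in
lemma iteratedDeriv_expNegInvGlue_bound (n : ℕ) {ρ : ℝ} (hρ : 1 < ρ) {K : Set ℝ}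
    (hK : IsCompact K) :
    ∃ C, 0 ≤ C ∧ ∀ x ∈ K, |iteratedDeriv n expNegInvGlue x| ≤ C * expNegInvGlue x ^ (1 / ρ) := by
  obtain ⟨p, hp⟩ := iteratedDeriv_expNegInvGlue n
  have hc := Real.HolderConjugate.conjExponent hρ
  set σ := ρ.conjExponent
  have hσ : σ ≠ 0 := hc.symm.pos.ne'
  -- `p.comp (C σ * X)` at `(σ x)⁻¹` is `p` at `x⁻¹`, so the factor `p (1/x) E (σ x)` is continuous.
  have hcont : Continuous fun x : ℝ ↦ p.eval x⁻¹ * expNegInvGlue (σ * x) := by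
    have := (expNegInvGlue.continuous_polynomial_eval_inv_mul (p.comp (C σ * X))).comp
      (continuous_const_mul σ)
    refine this.congr fun x ↦ ?_
    have hx : σ * (σ * x)⁻¹ = x⁻¹ := by rw [mul_inv, mul_inv_cancel_left₀ hσ]
    simp only [Function.comp_apply, eval_comp, eval_mul, eval_C, eval_X, hx]
  obtain ⟨M, hM⟩ := hK.exists_bound_of_continuousOn hcont.continuousOn
  refine ⟨max M 0, le_max_right _ _, fun x hx ↦ ?_⟩
  have hE : 0 ≤ expNegInvGlue x ^ (1 / ρ) := Real.rpow_nonneg (expNegInvGlue.nonneg x) _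
  rw [hp]
  calc |p.eval x⁻¹ * expNegInvGlue x|
      = |p.eval x⁻¹ * expNegInvGlue (σ * x)| * expNegInvGlue x ^ (1 / ρ) := by
        conv_lhs => rw [expNegInvGlue_split hc x, ← mul_assoc, abs_mul, abs_of_nonneg hE]
    _ ≤ max M 0 * expNegInvGlue x ^ (1 / ρ) := by
        gcongr
        exact (hM x hx).trans (le_max_left _ _)

lemma iteratedDeriv_expNegInvGlue_mul_bound (n : ℕ) {ρ : ℝ} (hρ : 1 < ρ) {K : Set ℝ}
    (hK : IsCompact K) {g : ℝ → ℝ} (hg : ContDiff ℝ (⊤ : ℕ∞) g) :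
    ∃ C, 0 ≤ C ∧ ∀ x ∈ K, |iteratedDeriv n (expNegInvGlue * g) x|
      ≤ C * expNegInvGlue x ^ (1 / ρ) := by
  choose A hA0 hA using fun i ↦ iteratedDeriv_expNegInvGlue_bound i hρ hK
  have hB' : ∀ j : ℕ, ∃ B, ∀ x ∈ K, ‖iteratedDeriv j g x‖ ≤ B := fun j ↦
    hK.exists_bound_of_continuousOn
      (hg.continuous_iteratedDeriv j (by exact_mod_cast le_top)).continuousOn
  choose B hB using hB'
  refine ⟨∑ i ∈ Finset.range (n + 1), (n.choose i : ℝ) * A i * |B (n - i)|, ?_, fun x hx ↦ ?_⟩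
  · exact Finset.sum_nonneg fun i _ ↦ by have := hA0 i; positivity
  rw [iteratedDeriv_mul
    (expNegInvGlue.contDiff.contDiffAt.of_le (by exact_mod_cast le_top : _ ≤ ((⊤ : ℕ∞) : WithTop ℕ∞)))
    (hg.contDiffAt.of_le (by exact_mod_cast le_top)), Finset.sum_mul]
  refine (Finset.abs_sum_le_sum_abs _ _).trans (Finset.sum_le_sum fun i _ ↦ ?_)
  have h1 := hA i x hx
  have h2 : |iteratedDeriv (n - i) g x| ≤ |B (n - i)| := (hB (n - i) x hx).trans (le_abs_self _)
  rw [abs_mul, abs_mul, Nat.abs_cast]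
  calc (n.choose i : ℝ) * |iteratedDeriv i expNegInvGlue x| * |iteratedDeriv (n - i) g x|
      ≤ (n.choose i : ℝ) * (A i * expNegInvGlue x ^ (1 / ρ)) * |B (n - i)| := by
        have := (abs_nonneg _).trans h1
        gcongr
    _ = _ := by ring

lemma expNegInvGlue_le_one (x : ℝ) : expNegInvGlue x ≤ 1 := by
  rcases le_or_gt x 0 with hx | hx
  · simp [expNegInvGlue.zero_of_nonpos hx]
  · simp [expNegInvGlue, hx.not_ge, hx.le]

lemma expNegInvGlue_le_smoothTransition (x : ℝ) :
    expNegInvGlue x ≤ 2 * smoothTransition x := by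
  have h := smoothTransition.pos_denom x
  rw [smoothTransition, mul_div_assoc', le_div_iff₀ h, mul_comm 2]
  have h1 := expNegInvGlue_le_one x
  have h2 := expNegInvGlue_le_one (1 - x)
  exact mul_le_mul_of_nonneg_left (by linarith) (expNegInvGlue.nonneg x)

lemma iteratedDeriv_smoothTransition_bound (n : ℕ) {ρ : ℝ} (hρ : 1 < ρ) {K : Set ℝ}
    (hK : IsCompact K) :
    ∃ C, 0 ≤ C ∧ ∀ x ∈ K, |iteratedDeriv n smoothTransition x|
      ≤ C * smoothTransition x ^ (1 / ρ) := by
  have hg : ContDiff ℝ (⊤ : ℕ∞) fun x : ℝ ↦ (expNegInvGlue x + expNegInvGlue (1 - x))⁻¹ :=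
    (expNegInvGlue.contDiff.add (expNegInvGlue.contDiff.comp (contDiff_const.sub contDiff_id))).inv
      fun x ↦ (smoothTransition.pos_denom x).ne'
  obtain ⟨C, hC0, hC⟩ := iteratedDeriv_expNegInvGlue_mul_bound n hρ hK hg
  have hS : (expNegInvGlue * fun x : ℝ ↦ (expNegInvGlue x + expNegInvGlue (1 - x))⁻¹)
      = smoothTransition := by
    funext x
    simp [smoothTransition, div_eq_mul_inv]
  rw [hS] at hC
  refine ⟨C * 2 ^ (1 / ρ), by positivity, fun x hx ↦ (hC x hx).trans ?_⟩
  rw [mul_assoc, ← Real.mul_rpow (by norm_num) (smoothTransition.nonneg x)]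
  exact mul_le_mul_of_nonneg_left (Real.rpow_le_rpow (expNegInvGlue.nonneg x)
    (expNegInvGlue_le_smoothTransition x) (by positivity)) hC0

lemma smoothTransition_lt {x y : ℝ} (hx : 0 < x) (hxy : x < y) (hy : y < 1) :
    smoothTransition x < smoothTransition y := by
  have key : ∀ {a b : ℝ}, 0 < a → a < b → expNegInvGlue a < expNegInvGlue b := by
    intro a b ha hab
    simp only [expNegInvGlue, ha.not_ge, (ha.trans hab).not_ge, if_false]
    exact Real.exp_lt_exp.2 (neg_lt_neg (inv_strictAnti₀ ha hab))
  rw [smoothTransition, smoothTransition,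
    div_lt_div_iff₀ (smoothTransition.pos_denom x) (smoothTransition.pos_denom y)]
  have h1 := key hx hxy
  have h2 := key (sub_pos.2 hy) (sub_lt_sub_left hxy 1)
  have := mul_lt_mul'' h1 h2 (expNegInvGlue.nonneg _) (expNegInvGlue.nonneg _)
  linarith

/-- **Existence of the smooth switch `β`.**
There is a smooth `β : ℝ → ℝ` with `0 ≤ β ≤ 1`, `β = 0` on `(−∞, −1]`, `β` strictly
increasing on `(−1, −1/2)`, `β = 1` on `[−1/2, ∞)`, and such that for every `N ∈ ℕ`, `ρ > 1`
and compact `K ⊆ ℝ` there is `C > 0` with `|β^{(N)}(u)| ≤ C β(u)^{1/ρ}` for all `u ∈ K`. -/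
theorem stmt_8 :
    ∃ β : ℝ → ℝ, ContDiff ℝ (⊤ : ℕ∞) β ∧ (∀ u : ℝ, 0 ≤ β u ∧ β u ≤ 1) ∧
      (∀ u : ℝ, u ≤ -1 → β u = 0) ∧ StrictMonoOn β (Set.Ioo (-1 : ℝ) (-1 / 2)) ∧
      (∀ u : ℝ, -1 / 2 ≤ u → β u = 1) ∧
      ∀ (N : ℕ) (ρ : ℝ), 1 < ρ → ∀ K : Set ℝ, IsCompact K →
        ∃ C > 0, ∀ u ∈ K, |iteratedDeriv N β u| ≤ C * (β u) ^ (1 / ρ) := by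
  refine ⟨fun u ↦ smoothTransition (2 * (u + 1)), ?_,
    fun u ↦ ⟨smoothTransition.nonneg _, smoothTransition.le_one _⟩,
    fun u hu ↦ smoothTransition.zero_of_nonpos (by linarith), ?_,
    fun u hu ↦ smoothTransition.one_of_one_le (by linarith), ?_⟩
  · exact smoothTransition.contDiff.comp (by fun_prop)
  · intro u hu v hv huv
    exact smoothTransition_lt (by linarith [hu.1]) (by linarith) (by linarith [hv.2])
  · intro N ρ hρ K hK
    obtain ⟨C, hC0, hC⟩ := iteratedDeriv_smoothTransition_bound N hρ
      (hK.image (f := fun u : ℝ ↦ 2 * (u + 1)) (by fun_prop))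
    refine ⟨2 ^ N * C + 1, by positivity, fun u hu ↦ ?_⟩
    have hd : iteratedDeriv N (fun u : ℝ ↦ smoothTransition (2 * (u + 1))) u
        = 2 ^ N * iteratedDeriv N smoothTransition (2 * (u + 1)) := by
      rw [iteratedDeriv_comp_add_const N (fun v ↦ smoothTransition (2 * v)) 1]
      simp only [iteratedDeriv_comp_const_mul (smoothTransition.contDiff (n := N)) 2]
    have h := hC _ (Set.mem_image_of_mem _ hu)
    have h0 := Real.rpow_nonneg (smoothTransition.nonneg (2 * (u + 1))) (1 / ρ)
    rw [hd, abs_mul, abs_of_nonneg (by positivity : (0 : ℝ) ≤ 2 ^ N)]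
    have := mul_le_mul_of_nonneg_left h (by positivity : (0 : ℝ) ≤ 2 ^ N)
    simp only at this ⊢
    linarith
end

section
/- Let h > 0, let Q > 0 and λ₀ > 0 with Q ≠ λ₀, and let y ≥ 0. Then ∫_{−∞}^{∞} e^{i y η / h} / ((η² + Q²)(i η + λ₀)) dη = 2π ( e^{−y Q / h} / (2 (λ₀ − Q) Q) − e^{−y λ₀ / h} / (λ₀² − Q²) ), where the integral is the (absolutely convergent) integral of a complex-valued function of the real variable η and i is the imaginary unit. -/
/-!
The identity is Fourier inversion for the explicit continuous function `kernelG Q lam`, which decays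
exponentially on both sides: a combination of `e^{-Qt}` and `e^{-λt}` for `t > 0`, a multiple of
`e^{Qt}` for `t ≤ 0`. Integrating the exponentials over the two half-lines and adding the
partial fractions gives
`∫ e^{-iηt} G(t) dt = 1 / ((η² + Q²)(iη + λ))` (`integral_kernelG`). The right-hand side is
integrable in `η` (`integrable_symbol`), so inversion at `t = y / h ≥ 0` recovers `2π G(y / h)`.
-/

open Real MeasureTheory Set

open scoped FourierTransform

/-- The inverse Fourier transform (angular frequency, normalised by `1 / 2π`) of
`η ↦ 1 / ((η² + Q²)(iη + lam))`. The coefficient on `t ≤ 0` makes it continuous at `0`. -/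
noncomputable def kernelG (Q lam : ℝ) (t : ℝ) : ℂ :=
  if t ≤ 0 then 1 / (2 * Q * ((lam : ℂ) + Q)) * Complex.exp ((Q : ℂ) * t)
  else 1 / (2 * ((lam : ℂ) - Q) * Q) * Complex.exp (-(Q : ℂ) * t) -
    1 / ((lam : ℂ) ^ 2 - (Q : ℂ) ^ 2) * Complex.exp (-(lam : ℂ) * t)

section

variable {Q lam : ℝ}

lemma kernel_denoms (hQ : 0 < Q) (hlam : 0 < lam) (hne : Q ≠ lam) :
    (Q : ℂ) ≠ 0 ∧ (lam : ℂ) + Q ≠ 0 ∧ (lam : ℂ) - Q ≠ 0 := by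
  refine ⟨by exact_mod_cast hQ.ne', by exact_mod_cast (add_pos hlam hQ).ne', ?_⟩
  exact_mod_cast sub_ne_zero.2 hne.symm

lemma continuous_kernelG (hQ : 0 < Q) (hlam : 0 < lam) (hne : Q ≠ lam) :
    Continuous (kernelG Q lam) := by
  obtain ⟨h1, h2, h3⟩ := kernel_denoms hQ hlam hne
  unfold kernelG
  refine Continuous.if_le (by fun_prop) (by fun_prop) continuous_id continuous_const ?_
  rintro x rfl
  have h4 : (lam : ℂ) ^ 2 - (Q : ℂ) ^ 2 = (lam + Q) * (lam - Q) := by ring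
  simp only [Complex.ofReal_zero, mul_zero, Complex.exp_zero, mul_one]
  rw [h4]
  field_simp
  ring

lemma integrableOn_kernelG_aux (hQ : 0 < Q) (hlam : 0 < lam) (η : ℝ) :
    IntegrableOn (fun t : ℝ ↦ Complex.exp (((Q : ℂ) - Complex.I * η) * t)) (Iic 0) ∧
    IntegrableOn (fun t : ℝ ↦ Complex.exp ((-(Q : ℂ) - Complex.I * η) * t)) (Ioi 0) ∧
    IntegrableOn (fun t : ℝ ↦ Complex.exp ((-(lam : ℂ) - Complex.I * η) * t)) (Ioi 0) :=
  ⟨integrableOn_exp_mul_complex_Iic (by simpa using hQ) 0,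
    integrableOn_exp_mul_complex_Ioi (by simpa using hQ) 0,
    integrableOn_exp_mul_complex_Ioi (by simpa using hlam) 0⟩

lemma exp_mul_kernelG_Iic (η : ℝ) {t : ℝ} (ht : t ∈ Iic (0 : ℝ)) :
    Complex.exp (-(Complex.I * η * t)) * kernelG Q lam t =
      1 / (2 * Q * ((lam : ℂ) + Q)) * Complex.exp (((Q : ℂ) - Complex.I * η) * t) := by
  rw [kernelG, if_pos (mem_Iic.1 ht), mul_left_comm, ← Complex.exp_add]
  ring_nf

lemma exp_mul_kernelG_Ioi (η : ℝ) {t : ℝ} (ht : t ∈ Ioi (0 : ℝ)) :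
    Complex.exp (-(Complex.I * η * t)) * kernelG Q lam t =
      1 / (2 * ((lam : ℂ) - Q) * Q) * Complex.exp ((-(Q : ℂ) - Complex.I * η) * t) -
      1 / ((lam : ℂ) ^ 2 - (Q : ℂ) ^ 2) * Complex.exp ((-(lam : ℂ) - Complex.I * η) * t) := by
  rw [kernelG, if_neg (not_le.2 ht), mul_sub, mul_left_comm, ← Complex.exp_add, mul_left_comm,
    ← Complex.exp_add]
  ring_nf

lemma integrableOn_exp_mul_kernelG (hQ : 0 < Q) (hlam : 0 < lam) (η : ℝ) :
    IntegrableOn (fun t : ℝ ↦ Complex.exp (-(Complex.I * η * t)) * kernelG Q lam t) (Iic 0) ∧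
    IntegrableOn (fun t : ℝ ↦ Complex.exp (-(Complex.I * η * t)) * kernelG Q lam t) (Ioi 0) := by
  obtain ⟨h1, h2, h3⟩ := integrableOn_kernelG_aux hQ hlam η
  exact ⟨(integrableOn_congr_fun (fun t ht ↦ exp_mul_kernelG_Iic η ht) measurableSet_Iic).2
      (h1.const_mul _),
    (integrableOn_congr_fun (fun t ht ↦ exp_mul_kernelG_Ioi η ht) measurableSet_Ioi).2
      ((h2.const_mul _).sub (h3.const_mul _))⟩

lemma integrable_kernelG (hQ : 0 < Q) (hlam : 0 < lam) : Integrable (kernelG Q lam) := by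
  obtain ⟨h1, h2⟩ := integrableOn_exp_mul_kernelG hQ hlam 0
  have := h1.union h2
  rw [Iic_union_Ioi, integrableOn_univ] at this
  simpa using this

lemma integral_kernelG (hQ : 0 < Q) (hlam : 0 < lam) (hne : Q ≠ lam) (η : ℝ) :
    ∫ t : ℝ, Complex.exp (-(Complex.I * η * t)) * kernelG Q lam t =
      1 / (((η : ℂ) ^ 2 + (Q : ℂ) ^ 2) * (Complex.I * η + lam)) := by
  obtain ⟨i1, i2⟩ := integrableOn_exp_mul_kernelG hQ hlam η
  obtain ⟨j1, j2, j3⟩ := integrableOn_kernelG_aux hQ hlam η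
  obtain ⟨h1, h2, h3⟩ := kernel_denoms hQ hlam hne
  rw [← intervalIntegral.integral_Iic_add_Ioi i1 i2,
    setIntegral_congr_fun measurableSet_Iic (fun t ht ↦ exp_mul_kernelG_Iic η ht),
    setIntegral_congr_fun measurableSet_Ioi (fun t ht ↦ exp_mul_kernelG_Ioi η ht),
    integral_sub (j2.const_mul _) (j3.const_mul _), integral_const_mul, integral_const_mul,
    integral_const_mul, integral_exp_mul_complex_Iic (by simpa using hQ),
    integral_exp_mul_complex_Ioi (by simpa using hQ),
    integral_exp_mul_complex_Ioi (by simpa using hlam)]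
  have k1 : (Q : ℂ) - Complex.I * η ≠ 0 := fun e ↦ hQ.ne' (by simpa using congrArg Complex.re e)
  have k2 : (Q : ℂ) + Complex.I * η ≠ 0 := fun e ↦ hQ.ne' (by simpa using congrArg Complex.re e)
  have k3 : Complex.I * η + (lam : ℂ) ≠ 0 :=
    fun e ↦ hlam.ne' (by simpa using congrArg Complex.re e)
  have e1 : -(Q : ℂ) - Complex.I * η = -(Q + Complex.I * η) := by ring
  have e2 : -(lam : ℂ) - Complex.I * η = -(Complex.I * η + lam) := by ring
  have e3 : (η : ℂ) ^ 2 + (Q : ℂ) ^ 2 = (Q - Complex.I * η) * (Q + Complex.I * η) := by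
    linear_combination ((η : ℂ) ^ 2) * Complex.I_sq
  have e4 : (lam : ℂ) ^ 2 - (Q : ℂ) ^ 2 = (lam + Q) * (lam - Q) := by ring
  rw [e1, e2, e3, e4]
  simp only [Complex.ofReal_zero, mul_zero, Complex.exp_zero]
  -- Treating `iη` as an atom keeps the partial fraction identity purely polynomial.
  generalize Complex.I * (η : ℂ) = z at *
  field_simp
  ring

end

lemma integrable_symbol {Q lam : ℝ} (hQ : 0 < Q) (hlam : 0 < lam) :
    Integrable (fun η : ℝ ↦ 1 / (((η : ℂ) ^ 2 + (Q : ℂ) ^ 2) * (Complex.I * η + lam))) := by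
  refine (integrable_inv_one_add_sq.const_mul ((1 + 1 / Q ^ 2) / lam)).mono' ?_ ?_
  · exact Measurable.aestronglyMeasurable (by fun_prop)
  · refine Filter.Eventually.of_forall fun η ↦ ?_
    have n1 : ‖(η : ℂ) ^ 2 + (Q : ℂ) ^ 2‖ = η ^ 2 + Q ^ 2 := by
      rw [← Complex.ofReal_pow, ← Complex.ofReal_pow, ← Complex.ofReal_add, Complex.norm_real,
        Real.norm_of_nonneg (by positivity)]
    have n2 : lam ≤ ‖Complex.I * η + (lam : ℂ)‖ := by
      simpa using Complex.re_le_norm (Complex.I * η + (lam : ℂ))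
    have n3 : 1 + η ^ 2 ≤ (1 + 1 / Q ^ 2) * (η ^ 2 + Q ^ 2) := by
      have : (1 + 1 / Q ^ 2) * (η ^ 2 + Q ^ 2) = 1 + η ^ 2 + (Q ^ 2 + η ^ 2 / Q ^ 2) := by
        field_simp
        ring
      rw [this]
      exact le_add_of_nonneg_right (by positivity)
    rw [norm_div, norm_mul, n1, norm_one]
    calc 1 / ((η ^ 2 + Q ^ 2) * ‖Complex.I * η + (lam : ℂ)‖)
        ≤ 1 / ((η ^ 2 + Q ^ 2) * lam) := by gcongr
      _ ≤ (1 + 1 / Q ^ 2) / lam * (1 + η ^ 2)⁻¹ := by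
        rw [← div_eq_mul_inv, div_div, div_le_div_iff₀ (by positivity) (by positivity)]
        nlinarith

/-- Mathlib's Fourier transform uses the frequency `w` with `η = 2πw`. -/
lemma fourier_kernelG {Q lam : ℝ} (hQ : 0 < Q) (hlam : 0 < lam) (hne : Q ≠ lam) (w : ℝ) :
    𝓕 (kernelG Q lam) w = 1 / ((((2 * π * w : ℝ) : ℂ) ^ 2 + (Q : ℂ) ^ 2) *
      (Complex.I * (2 * π * w : ℝ) + lam)) := by
  rw [← integral_kernelG hQ hlam hne, Real.fourier_real_eq_integral_exp_smul]
  refine integral_congr_ae (Filter.Eventually.of_forall fun t ↦ ?_)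
  simp only [smul_eq_mul]
  congr 2
  push_cast
  ring

/-- **A residue-type identity.**
Let `h > 0`, `Q > 0`, `λ₀ > 0` with `Q ≠ λ₀`, and `y ≥ 0`. Then
`∫_{−∞}^{∞} e^{iyη/h} / ((η² + Q²)(iη + λ₀)) dη
  = 2π ( e^{−yQ/h} / (2(λ₀ − Q)Q) − e^{−yλ₀/h} / (λ₀² − Q²) )`. -/
theorem stmt_10 (h Q lam y : ℝ) (hh : 0 < h) (hQ : 0 < Q) (hlam : 0 < lam) (hne : Q ≠ lam)
    (hy : 0 ≤ y) :
    (∫ η : ℝ, Complex.exp (Complex.I * y * η / h) /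
        (((η : ℂ) ^ 2 + (Q : ℂ) ^ 2) * (Complex.I * η + lam))) =
      (2 * (π : ℂ)) *
        (Complex.exp (-(y * Q / h)) / (2 * ((lam : ℂ) - Q) * Q) -
          Complex.exp (-(y * lam / h)) / ((lam : ℂ) ^ 2 - (Q : ℂ) ^ 2)) := by
  have hF : 𝓕 (kernelG Q lam) = fun w : ℝ ↦ 1 / ((((2 * π * w : ℝ) : ℂ) ^ 2 + (Q : ℂ) ^ 2) *
      (Complex.I * (2 * π * w : ℝ) + lam)) := funext (fourier_kernelG hQ hlam hne)
  have hFint : Integrable (𝓕 (kernelG Q lam)) := by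
    rw [hF]
    exact (integrable_symbol hQ hlam).comp_mul_left' (by positivity : 2 * π ≠ 0)
  have hinv := congrFun ((continuous_kernelG hQ hlam hne).fourierInv_fourier_eq
    (integrable_kernelG hQ hlam) hFint) (y / h)
  rw [Real.fourierInv_eq', hF] at hinv
  have hscale := Measure.integral_comp_mul_left (fun η : ℝ ↦ Complex.exp (Complex.I * y * η / h) /
        (((η : ℂ) ^ 2 + (Q : ℂ) ^ 2) * (Complex.I * η + lam))) (2 * π)
  have hG : kernelG Q lam (y / h) = Complex.exp (-(y * Q / h)) / (2 * ((lam : ℂ) - Q) * Q) -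
          Complex.exp (-(y * lam / h)) / ((lam : ℂ) ^ 2 - (Q : ℂ) ^ 2) := by
    obtain rfl | hy' := hy.eq_or_lt
    -- `kernelG` takes its left branch at `0`, where the two branches agree.
    · obtain ⟨h1, h2, h3⟩ := kernel_denoms hQ hlam hne
      have h4 : (lam : ℂ) ^ 2 - (Q : ℂ) ^ 2 = (lam + Q) * (lam - Q) := by ring
      rw [h4]
      simp only [kernelG, zero_div, le_refl, if_true, Complex.ofReal_zero, mul_zero, zero_mul,
        neg_zero, Complex.exp_zero, mul_one]
      field_simp
      ring
    · rw [kernelG, if_neg (not_le.2 (div_pos hy' hh))]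
      push_cast
      ring_nf
  rw [← hG, ← hinv]
  have hpi : (0 : ℝ) < 2 * π := by positivity
  rw [abs_of_pos (inv_pos.2 hpi), eq_comm, inv_smul_eq_iff₀ hpi.ne'] at hscale
  rw [hscale, Complex.real_smul]
  push_cast
  congr 1
  refine integral_congr_ae (Filter.Eventually.of_forall fun w ↦ ?_)
  simp only [smul_eq_mul, mul_one_div]
  congr 2
  simp
  ring
end
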